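/- arXiv:2605.19488 — 2 statements merged into one kernel-verified Lean document; each statement's English description precedes it below -/
import Mathlib

section
/- For n ≥ 1 prisoners and r ≥ 1 rooms, there exists some number of states q for which the prisoners have a symmetric winning strategy if and only if gcd(n, r) = 1. Furthermore, there is a function f : ℕ → ℕ such that for every pair n, r with gcd(n, r) = 1 and every q ≥ f(min(n, r)), the prisoners have a symmetric winning strategy for r rooms with q states. -/
namespace PrisonersGame

/-- A deterministic strategy for a prisoner: given the list of states observed
on previous visits and the state observed on the current visit, return the
state to leave the room in and whether to declare. -/
def Strategy : Type := List ℕ → ℕ → ℕ × Bool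

/-- A strategy is valid for `q` states if, whenever all states observed so far
are among `0, …, q-1`, the state it leaves the room in is among `0, …, q-1`. -/
def Strategy.ValidFor (q : ℕ) (σ : Strategy) : Prop :=
  ∀ (h : List ℕ) (s : ℕ), (∀ x ∈ h, x < q) → s < q → (σ h s).1 < q

/-- A schedule: at each time step, one prisoner is led into one room. -/
def Schedule (n r : ℕ) : Type := ℕ → Fin n × Fin r

/-- A schedule is fair if every prisoner is led into every room infinitely often. -/
def Schedule.Fair {n r : ℕ} (sched : Schedule n r) : Prop :=
  ∀ (p : Fin n) (room : Fin r), {t : ℕ | sched t = (p, room)}.Infinite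

/-- The state of play just before step `t`: the current states of the rooms, and
the list of states observed so far by each prisoner. All rooms start in state `0`. -/
def run {n r : ℕ} (strat : Fin n → Strategy) (sched : Schedule n r) :
    ℕ → (Fin r → ℕ) × (Fin n → List ℕ)
  | 0 => (fun _ => 0, fun _ => [])
  | t + 1 =>
      let prev := run strat sched t
      let p := (sched t).1
      let room := (sched t).2
      let obs := prev.1 room
      (Function.update prev.1 room (strat p (prev.2 p) obs).1,
        Function.update prev.2 p (prev.2 p ++ [obs]))

/-- The prisoner visiting at step `t` declares during that visit. -/
def declaresAt {n r : ℕ} (strat : Fin n → Strategy) (sched : Schedule n r)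
    (t : ℕ) : Prop :=
  (strat (sched t).1 ((run strat sched t).2 (sched t).1)
      ((run strat sched t).1 (sched t).2)).2 = true

/-- Every prisoner has visited every room by step `t` (inclusive). -/
def allVisitedBy {n r : ℕ} (sched : Schedule n r) (t : ℕ) : Prop :=
  ∀ (p : Fin n) (room : Fin r), ∃ s ≤ t, sched s = (p, room)

/-- A strategy profile is winning if, for every fair schedule, some prisoner
eventually declares, and no prisoner ever declares at a time before every
prisoner has visited every room. -/
def Winning {n r : ℕ} (strat : Fin n → Strategy) : Prop :=
  ∀ sched : Schedule n r, sched.Fair →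
    (∃ t, declaresAt strat sched t) ∧
    ∀ t, declaresAt strat sched t → allVisitedBy sched t

/-- `n` prisoners have a winning strategy for `r` rooms with `q` states. -/
def HasWinningStrategy (n r q : ℕ) : Prop :=
  ∃ strat : Fin n → Strategy, (∀ p, (strat p).ValidFor q) ∧ Winning (n := n) (r := r) strat

/-- `n` prisoners have a symmetric winning strategy (all prisoners use the
same strategy) for `r` rooms with `q` states. -/
def HasSymmetricWinningStrategy (n r q : ℕ) : Prop :=
  ∃ σ : Strategy, σ.ValidFor q ∧ Winning (n := n) (r := r) (fun _ => σ)

end PrisonersGame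

/-!
Suppose that `d > 1` divides both `n` and `r`. Replace each prisoner and each room of a smaller game
by `d` numbered copies, and each visit by a block of `d` visits, in which copy `x` of the prisoner
enters copy `x + s` of the room. Symmetric strategies keep the copies in step whatever the shifts
`s` are, so a declaration is made at the same time as with all shifts equal to `0`; but then copy
`0` of a prisoner has not met copy `1` of any room.

If `n` and `r` are coprime, write `u * n = w * r + 1`. Every prisoner starts with charge `u`, and
every room costs `w` to whoever enters it first. Opposite charges cancel by way of debts left in
rooms, until a single unit is left. Each prisoner also starts with a token, which it gives up only
at charge `0`; so a prisoner of charge `1` that holds all `n` tokens knows that the others have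
charge `0` and have nothing left to do. It becomes the leader. It marks all rooms, offers the
next round to some prisoner, who empties all rooms and reports back, and marks all rooms again.
After `n - 1` such rounds and a last marking, every prisoner has visited every room.
-/

namespace PrisonersGame

/-! ### A common divisor makes symmetric play impossible -/

section Impossibility

open Function Filter

/-- Given `d` numbered copies of each entry of a table, located through `e`, the table `F` is
obtained from `old` by replacing the first `i` copies of every entry by those of `new`. -/
def Interleaved {α β γ : Type*} {d : ℕ} (e : α × Fin d ≃ γ) (i : ℕ) (old new : α → β)
    (F : γ → β) : Prop :=
  ∀ a x, F (e (a, x)) = if x.val < i then new a else old a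

theorem Interleaved.update {α β γ : Type*} [DecidableEq α] [DecidableEq γ] {d : ℕ}
    {e : α × Fin d ≃ γ} {i : Fin d} {f : α → β} {a₀ : α} {w : β} {F : γ → β}
    (h : Interleaved e i f (update f a₀ w) F) :
    Interleaved e (i + 1) f (update f a₀ w) (update F (e (a₀, i)) w) := by
  intro a x
  rcases eq_or_ne x i with rfl | hx
  · by_cases ha : a = a₀ <;> simp [ha, h a x]
  · have hlt : x.val < i + 1 ↔ x.val < i := by grind
    simp [hx, h a x, hlt]

variable {N K d : ℕ} [NeZero d]

/-- In the block played from time `m * d`, copy `x` of the prisoner of step `m` of `sched` enters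
copy `x + shift m` of the room of that step, for `x = 0, …, d - 1` in turn. -/
def blowUp (sched : Schedule N K) (shift : ℕ → Fin d) : Schedule (N * d) (K * d) :=
  fun t => (finProdFinEquiv ((sched (t / d)).1, Fin.ofNat d t),
    finProdFinEquiv ((sched (t / d)).2, Fin.ofNat d t + shift (t / d)))

/-- The rooms of the blown-up game, each copy numbered by the copy of the prisoner who enters it
in a block with shift `s`. -/
def shiftedRooms (s : Fin d) : Fin K × Fin d ≃ Fin (K * d) :=
  ((Equiv.refl _).prodCongr (Equiv.addRight s)).trans finProdFinEquiv

theorem blowUp_mul_add (sched : Schedule N K) (shift : ℕ → Fin d) (m : ℕ) (i : Fin d) :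
    blowUp sched shift (m * d + i) =
      (finProdFinEquiv ((sched m).1, i), shiftedRooms (shift m) ((sched m).2, i)) := by
  have hdiv : (m * d + i) / d = m := by
    rw [mul_comm, Nat.mul_add_div (NeZero.pos d), Nat.div_eq_of_lt i.2, add_zero]
  have hmod : Fin.ofNat d (m * d + i) = i := by
    simp [Fin.ofNat, Nat.mod_eq_of_lt i.2]
  simp only [blowUp, hdiv, hmod]
  rfl

/-- After `i` visits of block `m`, the blown-up game consists of `d` copies of the original game,
the first `i` of which have completed step `m`. -/
structure InSync (σ : Strategy) (sched : Schedule N K) (shift : ℕ → Fin d) (m i : ℕ) : Prop where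
  states : Interleaved (shiftedRooms (shift m)) i (run (fun _ => σ) sched m).1
    (run (fun _ => σ) sched (m + 1)).1 (run (fun _ => σ) (blowUp sched shift) (m * d + i)).1
  histories : Interleaved finProdFinEquiv i (run (fun _ => σ) sched m).2
    (run (fun _ => σ) sched (m + 1)).2 (run (fun _ => σ) (blowUp sched shift) (m * d + i)).2

variable {σ : Strategy} {sched : Schedule N K} {shift : ℕ → Fin d} {m : ℕ}

theorem InSync.state_eq {i : Fin d} (h : InSync σ sched shift m i) (Q : Fin K) :
    (run (fun _ => σ) (blowUp sched shift) (m * d + i)).1 (shiftedRooms (shift m) (Q, i)) =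
      (run (fun _ => σ) sched m).1 Q := by
  simpa using h.states Q i

theorem InSync.history_eq {i : Fin d} (h : InSync σ sched shift m i) (P : Fin N) :
    (run (fun _ => σ) (blowUp sched shift) (m * d + i)).2 (finProdFinEquiv (P, i)) =
      (run (fun _ => σ) sched m).2 P := by
  simpa using h.histories P i

theorem InSync.next_visit {i : Fin d} (h : InSync σ sched shift m i) :
    InSync σ sched shift m (i + 1) := by
  have hrun : run (fun _ => σ) (blowUp sched shift) (m * d + (i + 1)) =
      (update (run (fun _ => σ) (blowUp sched shift) (m * d + i)).1
          (shiftedRooms (shift m) ((sched m).2, i))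
          (σ ((run (fun _ => σ) sched m).2 (sched m).1)
            ((run (fun _ => σ) sched m).1 (sched m).2)).1,
        update (run (fun _ => σ) (blowUp sched shift) (m * d + i)).2
          (finProdFinEquiv ((sched m).1, i))
          ((run (fun _ => σ) sched m).2 (sched m).1 ++
            [(run (fun _ => σ) sched m).1 (sched m).2])) := by
    rw [← add_assoc, run]
    simp only [blowUp_mul_add, h.state_eq, h.history_eq]
  constructor
  · rw [hrun]
    exact h.states.update
  · rw [hrun]
    exact h.histories.update

theorem InSync.next_block (h : InSync σ sched shift m d) : InSync σ sched shift (m + 1) 0 := by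
  have hmul : (m + 1) * d + 0 = m * d + d := by ring
  constructor
  · intro Q y
    have hQ := h.states Q (y + shift (m + 1) - shift m)
    simpa [hmul, shiftedRooms] using hQ
  · intro P x
    simpa [hmul] using h.histories P x

theorem inSync (σ : Strategy) (sched : Schedule N K) (shift : ℕ → Fin d) (m : ℕ) {i : ℕ}
    (hi : i ≤ d) : InSync σ sched shift m i := by
  have finish_block : ∀ m, InSync σ sched shift m 0 → ∀ i ≤ d, InSync σ sched shift m i := by
    intro m h₀ i
    induction i with
    | zero => exact fun _ => h₀
    | succ i ih => exact fun hi => (ih (by omega)).next_visit (i := ⟨i, hi⟩)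
  induction m generalizing i with
  | zero => exact finish_block 0 ⟨fun _ _ => by simp [run], fun _ _ => by simp [run]⟩ i hi
  | succ m ih => exact finish_block (m + 1) (ih le_rfl).next_block i hi

theorem declaresAt_blowUp_iff (σ : Strategy) (sched : Schedule N K) (shift : ℕ → Fin d) (t : ℕ) :
    declaresAt (fun _ => σ) (blowUp sched shift) t ↔ declaresAt (fun _ => σ) sched (t / d) := by
  obtain ⟨m, i, rfl⟩ : ∃ (m : ℕ) (i : Fin d), t = m * d + i :=
    ⟨t / d, ⟨t % d, Nat.mod_lt _ (NeZero.pos d)⟩, (Nat.div_add_mod' t d).symm⟩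
  have hsync := inSync σ sched shift m i.2.le
  have hdiv : (m * d + i) / d = m := by
    rw [mul_comm, Nat.mul_add_div (NeZero.pos d), Nat.div_eq_of_lt i.2, add_zero]
  simp only [declaresAt, blowUp_mul_add, hsync.state_eq, hsync.history_eq, hdiv]

theorem blowUp_fair (h : ∀ v x, ∃ᶠ m in atTop, sched m = v ∧ shift m = x) :
    (blowUp sched shift).Fair := by
  intro p ρ
  obtain ⟨⟨P, x⟩, rfl⟩ := finProdFinEquiv.surjective p
  obtain ⟨⟨Q, y⟩, rfl⟩ := finProdFinEquiv.surjective ρ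
  rw [← Nat.frequently_atTop_iff_infinite]
  refine frequently_atTop.2 fun T => ?_
  obtain ⟨m, hm, hsched, hshift⟩ := frequently_atTop.1 (h (P, Q) (y - x)) T
  refine ⟨m * d + x, ?_, ?_⟩
  · exact hm.trans <| (Nat.le_mul_of_pos_right m (NeZero.pos d)).trans (Nat.le_add_right _ _)
  · simp [blowUp_mul_add, shiftedRooms, hsched, hshift]

theorem exists_forall_frequently_eq (α : Type*) [Countable α] [Nonempty α] :
    ∃ f : ℕ → α, ∀ a, ∃ᶠ m in atTop, f m = a := by
  obtain ⟨g, hg⟩ := exists_surjective_nat α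
  refine ⟨fun m => g m.unpair.1, fun a => frequently_atTop.2 fun T => ?_⟩
  obtain ⟨k, rfl⟩ := hg a
  exact ⟨Nat.pair k T, Nat.right_le_pair k T, by simp⟩

/-- Whether the strategy declares does not depend on the shifts, and with all shifts equal to `0`
up to the declaration, no prisoner has met a room copy numbered differently from itself. -/
theorem not_winning_mul (hN : 0 < N) (hK : 0 < K) (hd : d ≠ 1) (σ : Strategy) :
    ¬ Winning (n := N * d) (r := K * d) (fun _ => σ) := by
  intro hwin
  have hd_pos := NeZero.pos d
  have : Nonempty ((Fin N × Fin K) × Fin d) := ⟨(⟨0, hN⟩, ⟨0, hK⟩), 0⟩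
  obtain ⟨f, hf⟩ := exists_forall_frequently_eq ((Fin N × Fin K) × Fin d)
  let sched : Schedule N K := fun m => (f m).1
  obtain ⟨t, ht⟩ := (hwin (blowUp sched fun m => (f m).2)
    (blowUp_fair fun v x => (hf (v, x)).mono fun m hm => by simp [sched, hm])).1
  let lateShift : ℕ → Fin d := fun m => if m ≤ t / d then 0 else (f m).2
  have hfair : (blowUp sched lateShift).Fair := blowUp_fair fun v x =>
    ((hf (v, x)).and_eventually (eventually_gt_atTop (t / d))).mono fun m hm => by
      simp [sched, lateShift, hm.1, not_le.2 hm.2]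
  have hdeclares : declaresAt (fun _ => σ) (blowUp sched lateShift) t := by
    rwa [declaresAt_blowUp_iff] at ht ⊢
  obtain ⟨s, hst, hs⟩ := (hwin _ hfair).2 t hdeclares
    (finProdFinEquiv (⟨0, hN⟩, ⟨0, by omega⟩)) (finProdFinEquiv (⟨0, hK⟩, ⟨1, by omega⟩))
  have hshift : lateShift (s / d) = 0 := if_pos (Nat.div_le_div_right hst)
  simp only [blowUp, hshift, add_zero, Prod.mk.injEq, EmbeddingLike.apply_eq_iff_eq] at hs
  exact absurd (hs.1.2.symm.trans hs.2.2) (by simp)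

end Impossibility

theorem HasSymmetricWinningStrategy.coprime {n r q : ℕ} (hn : 1 ≤ n) (hr : 1 ≤ r)
    (h : HasSymmetricWinningStrategy n r q) : n.Coprime r := by
  obtain ⟨σ, -, hwin⟩ := h
  by_contra hgcd
  obtain ⟨p, hp, ⟨N, rfl⟩, ⟨K, rfl⟩⟩ := Nat.Prime.not_coprime_iff_dvd.1 hgcd
  rw [mul_comm p N, mul_comm p K] at hwin
  have : NeZero p := ⟨hp.ne_zero⟩
  exact not_winning_mul (Nat.pos_of_mul_pos_left hn) (Nat.pos_of_mul_pos_left hr) hp.ne_one σ hwin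

/-! ### Strategies given by automata -/

theorem exists_encoding {A : Type*} [Fintype A] (a₀ : A) :
    ∃ (enc : A → ℕ) (dec : ℕ → A),
      Function.LeftInverse dec enc ∧ enc a₀ = 0 ∧ ∀ a, enc a < Fintype.card A := by
  have : Nonempty A := ⟨a₀⟩
  have hcard : 0 < Fintype.card A := Fintype.card_pos
  let e := (Fintype.equivFin A).trans (Equiv.swap (Fintype.equivFin A a₀) ⟨0, hcard⟩)
  have he : Function.Injective fun a => (e a).val := Fin.val_injective.comp e.injective
  exact ⟨_, _, Function.leftInverse_invFun he, by simp [e], fun a => (e a).2⟩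

/-- What a prisoner does during a visit: the memory it retains, the state it leaves in the room,
and whether it declares. -/
@[ext]
structure Action (S A : Type*) where
  memory : S
  write : A
  declare : Bool

/-- A strategy with memory `S` over an alphabet `A` of room states; every prisoner begins with
memory `start` and every room in state `blank`. -/
structure Automaton (S A : Type*) where
  start : S
  blank : A
  act : S → A → Action S A

/-- The memories of all prisoners and the states of all rooms at a given time. -/
@[ext]
structure Config (S A : Type*) (n r : ℕ) where
  memory : Fin n → S
  room : Fin r → A

namespace Automaton

open Function

variable {S A : Type*} {n r : ℕ} (M : Automaton S A)

/-- The action taken in configuration `c` when prisoner `v.1` is led into room `v.2`. -/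
def actAt (c : Config S A n r) (v : Fin n × Fin r) : Action S A :=
  M.act (c.memory v.1) (c.room v.2)

/-- The visit `v` changes nothing and comes without a declaration. -/
def IdlesAt (c : Config S A n r) (v : Fin n × Fin r) : Prop :=
  M.actAt c v = ⟨c.memory v.1, c.room v.2, false⟩

/-- The configuration after the visit `v`. -/
def step (c : Config S A n r) (v : Fin n × Fin r) : Config S A n r where
  memory := update c.memory v.1 (M.actAt c v).memory
  room := update c.room v.2 (M.actAt c v).write

variable {M} in
theorem IdlesAt.step_eq {c : Config S A n r} {v : Fin n × Fin r} (h : M.IdlesAt c v) :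
    M.step c v = c := by
  rw [IdlesAt] at h
  simp [step, h]

variable {M} in
theorem IdlesAt.not_declare {c : Config S A n r} {v : Fin n × Fin r} (h : M.IdlesAt c v) :
    ¬ (M.actAt c v).declare := by
  rw [IdlesAt] at h
  simp [h]

/-- The configuration just before time `t`, the counterpart of `run`. -/
def play (sched : Schedule n r) : ℕ → Config S A n r
  | 0 => ⟨fun _ => M.start, fun _ => M.blank⟩
  | t + 1 => M.step (play sched t) (sched t)

/-- The counterpart of `Winning` for profiles in which every prisoner follows `M`. -/
def Wins (n r : ℕ) : Prop :=
  ∀ sched : Schedule n r, sched.Fair →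
    (∃ t, (M.actAt (M.play sched t) (sched t)).declare) ∧
    ∀ t, (M.actAt (M.play sched t) (sched t)).declare → allVisitedBy sched t

/-- The strategy that runs `M` on the observed states, `enc` and `dec` translating between the
alphabet of `M` and numbers. -/
def toStrategy (enc : A → ℕ) (dec : ℕ → A) : Strategy := fun history state =>
  let memory := history.foldl (fun m s => (M.act m (dec s)).memory) M.start
  let action := M.act memory (dec state)
  (enc action.write, action.declare)

variable {enc : A → ℕ} {dec : ℕ → A}

theorem run_toStrategy (hdec : LeftInverse dec enc) (hblank : enc M.blank = 0)
    (sched : Schedule n r) (t : ℕ) :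
    (∀ ρ, (run (fun _ => M.toStrategy enc dec) sched t).1 ρ = enc ((M.play sched t).room ρ)) ∧
    ∀ p, ((run (fun _ => M.toStrategy enc dec) sched t).2 p).foldl
      (fun m s => (M.act m (dec s)).memory) M.start = (M.play sched t).memory p := by
  induction t with
  | zero => simp [run, play, hblank]
  | succ t ih =>
    obtain ⟨hroom, hmemory⟩ := ih
    constructor
    · intro ρ
      rcases eq_or_ne ρ (sched t).2 with rfl | hρ
      · simp [run, play, step, actAt, toStrategy, hroom, hmemory, hdec _]
      · simp [run, play, step, hρ, hroom]
    · intro p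
      rcases eq_or_ne p (sched t).1 with rfl | hp
      · simp [run, play, step, actAt, hroom, hmemory, hdec _]
      · simp [run, play, step, hp, hmemory]

theorem declaresAt_toStrategy_iff (hdec : LeftInverse dec enc) (hblank : enc M.blank = 0)
    (sched : Schedule n r) (t : ℕ) :
    declaresAt (fun _ => M.toStrategy enc dec) sched t ↔
      (M.actAt (M.play sched t) (sched t)).declare := by
  obtain ⟨hroom, hmemory⟩ := M.run_toStrategy hdec hblank sched t
  simp [declaresAt, toStrategy, actAt, hroom, hmemory, hdec _]

variable {M} in
theorem Wins.hasSymmetricWinningStrategy [Fintype A] (hM : M.Wins n r) {q : ℕ}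
    (hq : Fintype.card A ≤ q) : HasSymmetricWinningStrategy n r q := by
  obtain ⟨enc, dec, hdec, hblank, henc⟩ := exists_encoding M.blank
  refine ⟨M.toStrategy enc dec, fun _ _ _ _ => (henc _).trans_le hq, fun sched hfair => ?_⟩
  simpa only [M.declaresAt_toStrategy_iff hdec hblank] using hM sched hfair

end Automaton

/-! ### Ranked invariants -/

section RankedInvariant

variable {n r : ℕ}

/-- The (prisoner, room) pairs that have occurred before time `t`. -/
def visited (sched : Schedule n r) (t : ℕ) : Set (Fin n × Fin r) :=
  {v | ∃ s < t, sched s = v}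

theorem visited_zero (sched : Schedule n r) : visited sched 0 = ∅ := by
  simp [visited]

theorem visited_mono (sched : Schedule n r) : Monotone (visited sched) :=
  fun _ _ hts _ ⟨s, hs, hv⟩ => ⟨s, hs.trans_le hts, hv⟩

theorem visited_succ (sched : Schedule n r) (t : ℕ) :
    visited sched (t + 1) = insert (sched t) (visited sched t) := by
  ext v
  simp only [visited, Set.mem_ofPred_eq, Set.mem_insert_iff, Nat.lt_succ_iff_lt_or_eq]
  grind

theorem allVisitedBy_of_visited_succ_eq_univ {sched : Schedule n r} {t : ℕ}
    (h : visited sched (t + 1) = Set.univ) : allVisitedBy sched t := by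
  intro p ρ
  obtain ⟨s, hs, hsched⟩ := h.symm ▸ Set.mem_univ (p, ρ)
  exact ⟨s, Nat.lt_succ_iff.1 hs, hsched⟩

namespace Automaton

variable {S A : Type*} {M : Automaton S A}

/-- A property of the visits made so far, the configuration and a rank that holds at the start,
survives every visit without a declaration, and forces progress: visits that do not idle decrease
the rank, and some visit does not idle. -/
structure RankedInvariant {α : Type*} [LT α] (M : Automaton S A) (n r : ℕ)
    (Inv : Set (Fin n × Fin r) → Config S A n r → α → Prop) : Prop where
  start : ∃ m, Inv ∅ ⟨fun _ => M.start, fun _ => M.blank⟩ m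
  mono : ∀ {V V' c m}, V ⊆ V' → Inv V c m → Inv V' c m
  safe : ∀ {V c m v}, Inv V c m → (M.actAt c v).declare → insert v V = Set.univ
  progress : ∀ {V c m v}, Inv V c m → ¬ M.IdlesAt c v → (M.actAt c v).declare = false →
    ∃ m' < m, Inv (insert v V) (M.step c v) m'
  live : ∀ {V c m}, Inv V c m → ∃ v, ¬ M.IdlesAt c v

namespace RankedInvariant

variable {α : Type*} [LT α] {Inv : Set (Fin n × Fin r) → Config S A n r → α → Prop}

theorem exists_rank_step (h : M.RankedInvariant n r Inv) {V : Set (Fin n × Fin r)}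
    {c : Config S A n r} {m : α} {v : Fin n × Fin r} (hInv : Inv V c m)
    (hdeclare : (M.actAt c v).declare = false) : ∃ m', Inv (insert v V) (M.step c v) m' := by
  by_cases hidle : M.IdlesAt c v
  · rw [hidle.step_eq]
    exact ⟨m, h.mono (Set.subset_insert _ _) hInv⟩
  · obtain ⟨m', -, hInv'⟩ := h.progress hInv hidle hdeclare
    exact ⟨m', hInv'⟩

theorem exists_rank_or_visited_eq_univ (h : M.RankedInvariant n r Inv) (sched : Schedule n r)
    (t : ℕ) : (∃ m, Inv (visited sched t) (M.play sched t) m) ∨ visited sched t = Set.univ := by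
  induction t with
  | zero => exact Or.inl (visited_zero sched ▸ h.start)
  | succ t ih =>
    rw [visited_succ]
    rcases ih with ⟨m, hInv⟩ | hall
    · cases hdeclare : (M.actAt (M.play sched t) (sched t)).declare
      · exact Or.inl (h.exists_rank_step hInv hdeclare)
      · exact Or.inr (h.safe hInv hdeclare)
    · exact Or.inr (by simp [hall])

theorem allVisitedBy_of_declare (h : M.RankedInvariant n r Inv) {sched : Schedule n r} {t : ℕ}
    (hdeclare : (M.actAt (M.play sched t) (sched t)).declare) : allVisitedBy sched t := by
  apply allVisitedBy_of_visited_succ_eq_univ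
  rw [visited_succ]
  rcases h.exists_rank_or_visited_eq_univ sched t with ⟨m, hInv⟩ | hall
  · exact h.safe hInv hdeclare
  · simp [hall]

theorem exists_first_not_idlesAt (h : M.RankedInvariant n r Inv) {sched : Schedule n r}
    (hfair : sched.Fair) {V : Set (Fin n × Fin r)} {t : ℕ} {m : α}
    (hInv : Inv V (M.play sched t) m) :
    ∃ s ≥ t, M.play sched s = M.play sched t ∧ ¬ M.IdlesAt (M.play sched s) (sched s) := by
  by_contra! hidle
  have hstationary : ∀ s ≥ t, M.play sched s = M.play sched t := by
    intro s hs
    induction s, hs using Nat.le_induction with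
    | base => rfl
    | succ s hs ih => exact (hidle s hs ih).step_eq.trans ih
  obtain ⟨v, hv⟩ := h.live hInv
  obtain ⟨s, hsv, hts⟩ := (hfair v.1 v.2).exists_gt t
  have hidle_v := hidle s hts.le (hstationary s hts.le)
  rw [hstationary s hts.le, Set.mem_ofPred.1 hsv] at hidle_v
  exact hv hidle_v

theorem exists_declare_of_rank [WellFoundedLT α] (h : M.RankedInvariant n r Inv)
    {sched : Schedule n r} (hfair : sched.Fair) (m : α) :
    ∀ t, Inv (visited sched t) (M.play sched t) m →
      ∃ t, (M.actAt (M.play sched t) (sched t)).declare := by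
  induction m using WellFoundedLT.induction with
  | ind m ih =>
    intro t hInv
    obtain ⟨s, hts, hplay, hidle⟩ := h.exists_first_not_idlesAt hfair hInv
    cases hdeclare : (M.actAt (M.play sched s) (sched s)).declare
    · have hInv_s : Inv (visited sched s) (M.play sched s) m :=
        hplay ▸ h.mono (visited_mono sched hts) hInv
      obtain ⟨m', hlt, hInv'⟩ := h.progress hInv_s hidle hdeclare
      rw [← visited_succ] at hInv'
      exact ih m' hlt (s + 1) hInv'
    · exact ⟨s, hdeclare⟩

theorem wins [WellFoundedLT α] (h : M.RankedInvariant n r Inv) : M.Wins n r := by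
  refine fun sched hfair => ⟨?_, fun t => h.allVisitedBy_of_declare⟩
  obtain ⟨m, hInv⟩ := h.start
  exact h.exists_declare_of_rank hfair m 0 (visited_zero sched ▸ hInv)

end RankedInvariant

end Automaton

end RankedInvariant

/-! ### The protocol -/

/-- The states of a room. All rooms are `fresh` before the first visit; during the election an
`empty` room may come to hold a unit of `debt` or a `token`. In the rounds that follow, the leader
sets every room to `marked` and makes an `offer` in one of them; the prisoner who takes it up
resets every room to `empty` and leaves `returned` in one of them. -/
inductive RoomState
  | fresh | empty | debt | token | marked | offer | returned
  deriving DecidableEq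

instance : Fintype RoomState :=
  ⟨{.fresh, .empty, .debt, .token, .marked, .offer, .returned}, fun s => by cases s <;> decide⟩

/-- What a prisoner remembers: its charge and its tokens during the election; as leader, the number
`j` of prisoners that have not helped yet and the number `k` of rooms it has marked in this round;
as helper, the number `k` of rooms it has emptied. -/
inductive Memory
  | elect (charge : ℤ) (tokens : ℕ)
  | lead (j k : ℕ)
  | wait (j : ℕ)
  | help (k : ℕ)
  | retired

/-- The moves of the election. A fresh room costs `w` units of charge. Negative charge is paid off
by leaving debts in empty rooms, which prisoners of positive charge cancel; prisoners of charge `0`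
put their tokens into empty rooms, where prisoners of positive charge collect them. -/
def negotiate (w : ℕ) (c : ℤ) (a : ℕ) : RoomState → Action Memory RoomState
  | .fresh => ⟨.elect (c - w) a, .empty, false⟩
  | .empty =>
    if c < 0 then ⟨.elect (c + 1) a, .debt, false⟩
    else if c = 0 ∧ 0 < a then ⟨.elect c (a - 1), .token, false⟩
    else ⟨.elect c a, .empty, false⟩
  | .debt => if 0 < c then ⟨.elect (c - 1) a, .empty, false⟩ else ⟨.elect c a, .debt, false⟩
  | .token => if 0 < c then ⟨.elect c (a + 1), .empty, false⟩ else ⟨.elect c a, .token, false⟩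
  | s => ⟨.elect c a, s, false⟩

/-- The transition function of the protocol for `n` prisoners and `r` rooms. -/
def respond (n r w : ℕ) : Memory → RoomState → Action Memory RoomState
  | .elect c a, s =>
    if c = 1 ∧ a = n ∧ s = .empty then ⟨.lead (n - 1) 1, .marked, false⟩
    else if c = 0 ∧ a = 0 ∧ s = .offer then ⟨.help 1, .empty, false⟩
    else negotiate w c a s
  | .lead j k, .empty => ⟨.lead j (k + 1), .marked, false⟩
  | .lead j k, .marked =>
    if k = r then (if j = 0 then ⟨.lead j k, .marked, true⟩ else ⟨.wait (j - 1), .offer, false⟩)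
    else ⟨.lead j k, .marked, false⟩
  | .wait j, .returned => ⟨.lead j 1, .marked, false⟩
  | .help k, .marked => ⟨.help (k + 1), .empty, false⟩
  | .help k, .empty =>
    if k = r then ⟨.retired, .returned, false⟩ else ⟨.help k, .empty, false⟩
  | m, s => ⟨m, s, false⟩

/-- The protocol in which every prisoner begins with charge `u` and one token. -/
def protocol (n r u w : ℕ) : Automaton Memory RoomState where
  start := .elect u 1
  blank := .fresh
  act := respond n r w

/-! ### The election -/

section Election

open Function

theorem sum_update_add {ι X β : Type*} [Fintype ι] [DecidableEq ι] [AddCommMonoid β]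
    (f : X → β) (g : ι → X) (i : ι) (x : X) :
    ∑ j, f (update g i x j) + f (g i) = ∑ j, f (g j) + f x := by
  have herase : ∑ j ∈ Finset.univ.erase i, f (update g i x j) =
      ∑ j ∈ Finset.univ.erase i, f (g j) :=
    Finset.sum_congr rfl fun j hj => by rw [update_of_ne (Finset.ne_of_mem_erase hj)]
  rw [← Finset.add_sum_erase _ _ (Finset.mem_univ i), herase, update_self,
    ← Finset.add_sum_erase _ (fun j => f (g j)) (Finset.mem_univ i)]
  ac_rfl

/-- The sum of a weight over all prisoners and rooms. -/
def Config.total {S A β : Type*} [AddCommMonoid β] {n r : ℕ} (f : S → β) (g : A → β)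
    (c : Config S A n r) : β :=
  ∑ p, f (c.memory p) + ∑ ρ, g (c.room ρ)

theorem Config.total_eq_add {S A β : Type*} [AddCommMonoid β] {n r : ℕ} (f : S → β) (g : A → β)
    (c : Config S A n r) (l : Fin n) : c.total f g =
      f (c.memory l) + (∑ p ∈ Finset.univ.erase l, f (c.memory p) + ∑ ρ, g (c.room ρ)) := by
  rw [total, ← Finset.add_sum_erase _ _ (Finset.mem_univ l), add_assoc]

theorem Automaton.total_step_add {S A β : Type*} [AddCommMonoid β] {n r : ℕ}
    (M : Automaton S A) (f : S → β) (g : A → β) (c : Config S A n r) (v : Fin n × Fin r) :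
    (M.step c v).total f g + (f (c.memory v.1) + g (c.room v.2)) =
      c.total f g + (f (M.actAt c v).memory + g (M.actAt c v).write) := by
  simp only [Config.total, Automaton.step]
  rw [add_add_add_comm, sum_update_add, sum_update_add, add_add_add_comm]

namespace Memory

/-- The charge held by a prisoner. -/
def charge : Memory → ℤ
  | elect c _ => c
  | _ => 0

/-- The number of tokens held by a prisoner. -/
def tokens : Memory → ℕ
  | elect _ a => a
  | _ => 0

/-- The contribution of a prisoner to the potential that decreases during the election with `n`
prisoners. -/
def potential (n : ℕ) : Memory → ℕ
  | elect c a => if 0 < c then (2 * n + 1) * c.toNat else c.natAbs + 2 * a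
  | _ => 0

/-- The memories that occur during the election: a prisoner of positive charge still has a
token. -/
def Electing (m : Memory) : Prop :=
  ∃ c a, m = elect c a ∧ (0 < c → 0 < a)

theorem Electing.charge_nonpos {m : Memory} (h : m.Electing) (htokens : m.tokens = 0) :
    m.charge ≤ 0 := by
  obtain ⟨c, a, rfl, hc⟩ := h
  grind [charge, tokens]

end Memory

namespace RoomState

/-- The charge held by a room, when a fresh room costs `w`. -/
def charge (w : ℕ) : RoomState → ℤ
  | fresh => -w
  | debt => -1
  | _ => 0

theorem charge_nonpos {w : ℕ} {s : RoomState} : s.charge w ≤ 0 := by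
  cases s <;> simp [charge]

/-- The number of tokens held by a room. -/
def tokens : RoomState → ℕ
  | token => 1
  | _ => 0

/-- The contribution of a room to the potential that decreases during the election with `n`
prisoners. -/
def potential (n w : ℕ) : RoomState → ℕ
  | fresh => 2 * n + w + 1
  | token => 1
  | _ => 0

/-- The room states that occur during the election. -/
def Electing (s : RoomState) : Prop :=
  s = fresh ∨ s = empty ∨ s = debt ∨ s = token

end RoomState

variable {w : ℕ} {c : ℤ} {a : ℕ} {s : RoomState}

theorem negotiate_declare : (negotiate w c a s).declare = false := by
  cases s <;> grind [negotiate]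

theorem negotiate_memory_electing (hc : 0 < c → 0 < a) :
    (negotiate w c a s).memory.Electing := by
  cases s <;> grind [negotiate, Memory.Electing]

theorem negotiate_write_electing (hs : s.Electing) : (negotiate w c a s).write.Electing := by
  cases s <;> grind [negotiate, RoomState.Electing]

theorem negotiate_charge : (negotiate w c a s).memory.charge + (negotiate w c a s).write.charge w =
    (Memory.elect c a).charge + s.charge w := by
  cases s <;> grind [negotiate, Memory.charge, RoomState.charge]

theorem negotiate_tokens : (negotiate w c a s).memory.tokens + (negotiate w c a s).write.tokens =
    (Memory.elect c a).tokens + s.tokens := by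
  cases s <;> grind [negotiate, Memory.tokens, RoomState.tokens]

theorem negotiate_potential_lt {n : ℕ} (ha : a ≤ n)
    (hidle : negotiate w c a s ≠ ⟨.elect c a, s, false⟩) :
    (negotiate w c a s).memory.potential n + (negotiate w c a s).write.potential n w <
      (Memory.elect c a).potential n + s.potential n w := by
  cases s with
  | fresh =>
    have hfresh : (2 * n + 1) * (c - w).toNat ≤ (2 * n + 1) * c.toNat :=
      Nat.mul_le_mul_left _ (by omega)
    grind [negotiate, Memory.potential, RoomState.potential]
  | empty => grind [negotiate, Memory.potential, RoomState.potential]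
  | debt =>
    have hdebt : 0 < c → (2 * n + 1) * c.toNat = (2 * n + 1) * (c - 1).toNat + (2 * n + 1) :=
      fun hc => by rw [← Nat.mul_succ]; congr 1; omega
    grind [negotiate, Memory.potential, RoomState.potential]
  | token => grind [negotiate, Memory.potential, RoomState.potential]
  | marked | offer | returned => exact absurd rfl hidle

theorem respond_elect {n r : ℕ} (hs : s.Electing) (hlead : ¬ (c = 1 ∧ a = n ∧ s = .empty)) :
    respond n r w (.elect c a) s = negotiate w c a s := by
  grind [respond, RoomState.Electing]

variable {n r u : ℕ}

/-- The configurations of the election: the conservation laws for charge and tokens. -/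
structure Election (w : ℕ) (c : Config Memory RoomState n r) : Prop where
  memory : ∀ p, (c.memory p).Electing
  room : ∀ ρ, (c.room ρ).Electing
  charge : c.total Memory.charge (RoomState.charge w) = 1
  tokens : c.total Memory.tokens RoomState.tokens = n

/-- The visit `v` ends the election: prisoner `v.1` holds charge `1` and all tokens, and finds an
empty room. -/
def ElectedAt (c : Config Memory RoomState n r) (v : Fin n × Fin r) : Prop :=
  c.memory v.1 = .elect 1 n ∧ c.room v.2 = .empty

theorem ElectedAt.actAt_eq {c : Config Memory RoomState n r} {v : Fin n × Fin r}
    (h : ElectedAt c v) :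
    (protocol n r u w).actAt c v = ⟨.lead (n - 1) 1, .marked, false⟩ := by
  simp [Automaton.actAt, protocol, respond, h.1, h.2]

theorem ElectedAt.not_idlesAt {c : Config Memory RoomState n r} {v : Fin n × Fin r}
    (h : ElectedAt c v) : ¬ (protocol n r u w).IdlesAt c v := by
  simp [Automaton.IdlesAt, h.actAt_eq, h.1]

namespace Election

variable {c : Config Memory RoomState n r} {v : Fin n × Fin r} {l : Fin n}

theorem start (huw : u * n = w * r + 1) :
    Election w (⟨fun _ => .elect u 1, fun _ => .fresh⟩ : Config Memory RoomState n r) where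
  memory _ := ⟨u, 1, rfl, fun _ => Nat.one_pos⟩
  room _ := Or.inl rfl
  charge := by
    simp only [Config.total, Memory.charge, RoomState.charge, Finset.sum_const, Finset.card_univ,
      Fintype.card_fin, nsmul_eq_mul]
    linear_combination (by exact_mod_cast huw : (u * n : ℤ) = w * r + 1)
  tokens := by simp [Config.total, Memory.tokens, RoomState.tokens]

theorem actAt_eq_negotiate (h : Election w c) (hv : ¬ ElectedAt c v) :
    ∃ k a, c.memory v.1 = .elect k a ∧ (0 < k → 0 < a) ∧
      (protocol n r u w).actAt c v = negotiate w k a (c.room v.2) := by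
  obtain ⟨k, a, hmemory, hk⟩ := h.memory v.1
  refine ⟨k, a, hmemory, hk, ?_⟩
  rw [Automaton.actAt, hmemory]
  exact respond_elect (r := r) (h.room v.2) fun ⟨hk, ha, hs⟩ => hv ⟨by rw [hmemory, hk, ha], hs⟩

theorem tokens_le (h : Election w c) (p : Fin n) : (c.memory p).tokens ≤ n := by
  have hp := Finset.single_le_sum (fun q _ => Nat.zero_le (c.memory q).tokens) (Finset.mem_univ p)
  have htokens := h.tokens
  rw [Config.total] at htokens
  omega

theorem step (h : Election w c) (hv : ¬ ElectedAt c v) :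
    Election w ((protocol n r u w).step c v) := by
  obtain ⟨k, a, hmemory, hk, hact⟩ := h.actAt_eq_negotiate (u := u) hv
  constructor
  · intro p
    rcases eq_or_ne p v.1 with rfl | hp
    · simpa [Automaton.step, hact] using negotiate_memory_electing hk
    · simpa [Automaton.step, hp] using h.memory p
  · intro ρ
    rcases eq_or_ne ρ v.2 with rfl | hρ
    · simpa [Automaton.step, hact] using negotiate_write_electing (h.room v.2)
    · simpa [Automaton.step, hρ] using h.room ρ
  · have hstep := (protocol n r u w).total_step_add Memory.charge (RoomState.charge w) c v
    rw [hact, negotiate_charge, hmemory, h.charge] at hstep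
    exact add_right_cancel hstep
  · have hstep := (protocol n r u w).total_step_add Memory.tokens RoomState.tokens c v
    rw [hact, negotiate_tokens, hmemory, h.tokens] at hstep
    exact add_right_cancel hstep

theorem total_potential_step_lt (h : Election w c) (hv : ¬ ElectedAt c v)
    (hidle : ¬ (protocol n r u w).IdlesAt c v) :
    ((protocol n r u w).step c v).total (Memory.potential n) (RoomState.potential n w) <
      c.total (Memory.potential n) (RoomState.potential n w) := by
  obtain ⟨k, a, hmemory, hk, hact⟩ := h.actAt_eq_negotiate (u := u) hv
  rw [Automaton.IdlesAt, hact, hmemory] at hidle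
  have ha : a ≤ n := by simpa [hmemory, Memory.tokens] using h.tokens_le v.1
  have hlt := negotiate_potential_lt ha hidle
  have hstep := (protocol n r u w).total_step_add (Memory.potential n) (RoomState.potential n w) c v
  rw [hact, hmemory] at hstep
  omega

theorem tokens_eq_zero (h : Election w c) (hl : (c.memory l).tokens = n) :
    (∀ p ≠ l, (c.memory p).tokens = 0) ∧ ∀ ρ, (c.room ρ).tokens = 0 := by
  have htokens := h.tokens
  rw [Config.total_eq_add _ _ _ l, hl] at htokens
  have hmemory : ∑ p ∈ Finset.univ.erase l, (c.memory p).tokens = 0 := by omega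
  have hroom : ∑ ρ, (c.room ρ).tokens = 0 := by omega
  rw [Finset.sum_eq_zero_iff] at hmemory hroom
  exact ⟨fun p hp => hmemory p (by simp [hp]), fun ρ => hroom ρ (Finset.mem_univ ρ)⟩

theorem not_declare (h : Election w c) : ¬ ((protocol n r u w).actAt c v).declare := by
  by_cases hv : ElectedAt c v
  · simp [hv.actAt_eq]
  · obtain ⟨k, a, -, -, hact⟩ := h.actAt_eq_negotiate (u := u) hv
    simp [hact, negotiate_declare]

/-- A prisoner holding all tokens leaves none to the others, who therefore have charge at
most `0`; since the total charge is `1`, they have charge `0`, and so has every room. -/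
theorem elected (h : Election w c) (hw : 1 ≤ w) (hl : c.memory l = .elect 1 n) :
    (∀ p ≠ l, c.memory p = .elect 0 0) ∧ ∀ ρ, c.room ρ = .empty := by
  obtain ⟨htokens, hroom_tokens⟩ := h.tokens_eq_zero (l := l) (by rw [hl, Memory.tokens])
  have hmemory_nonpos : ∀ p ∈ Finset.univ.erase l, (c.memory p).charge ≤ 0 := by
    intro p hp
    exact (h.memory p).charge_nonpos (htokens p (Finset.ne_of_mem_erase hp))
  have hroom_nonpos : ∀ ρ ∈ Finset.univ, (c.room ρ).charge w ≤ 0 :=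
    fun ρ _ => RoomState.charge_nonpos
  have hmemory_sum := Finset.sum_nonpos hmemory_nonpos
  have hroom_sum := Finset.sum_nonpos hroom_nonpos
  have hcharge := h.charge
  rw [Config.total_eq_add _ _ _ l, hl, Memory.charge] at hcharge
  have hmemory := (Finset.sum_eq_zero_iff_of_nonpos hmemory_nonpos).1 (by omega)
  have hroom := (Finset.sum_eq_zero_iff_of_nonpos hroom_nonpos).1 (by omega)
  constructor
  · intro p hp
    obtain ⟨k, a, hmemory_p, -⟩ := h.memory p
    have hk := hmemory p (by simp [hp])
    have ha := htokens p hp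
    rw [hmemory_p] at hk ha ⊢
    rw [show k = 0 from hk, show a = 0 from ha]
  · intro ρ
    have hρ := hroom ρ (Finset.mem_univ ρ)
    have hρ_tokens := hroom_tokens ρ
    rcases h.room ρ with hs | hs | hs | hs <;>
      simp [hs, RoomState.charge, RoomState.tokens] at hρ hρ_tokens ⊢
    omega

theorem room_eq_empty_of_idlesAt (h : Election w c) (hv : 0 < (c.memory v.1).charge)
    (hidle : (protocol n r u w).IdlesAt c v) : c.room v.2 = .empty := by
  by_contra hroom
  obtain ⟨k, a, hmemory, -, hact⟩ := h.actAt_eq_negotiate (u := u) fun helected => hroom helected.2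
  rw [Automaton.IdlesAt, hact, hmemory] at hidle
  rw [hmemory, Memory.charge] at hv
  rcases h.room v.2 with hs | hs | hs | hs <;> grind [negotiate]

theorem charge_nonneg_of_idlesAt (h : Election w c) (hidle : (protocol n r u w).IdlesAt c v)
    (hroom : c.room v.2 = .empty) : 0 ≤ (c.memory v.1).charge ∧
      ((c.memory v.1).charge = 0 → (c.memory v.1).tokens = 0) := by
  obtain ⟨k, a, hmemory, -, hact⟩ :=
    h.actAt_eq_negotiate (u := u) fun helected => helected.not_idlesAt hidle
  rw [Automaton.IdlesAt, hact, hmemory, hroom] at hidle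
  rw [hmemory]
  grind [negotiate, Memory.charge, Memory.tokens]

theorem exists_charge_pos (h : Election w c) : ∃ p, 0 < (c.memory p).charge := by
  by_contra! hnonpos
  have hmemory : ∑ p, (c.memory p).charge ≤ 0 := Finset.sum_nonpos fun p _ => hnonpos p
  have hroom : ∑ ρ, (c.room ρ).charge w ≤ 0 :=
    Finset.sum_nonpos fun ρ _ => RoomState.charge_nonpos
  have hcharge := h.charge
  rw [Config.total] at hcharge
  omega

/-- If every visit idles, then the prisoner of positive charge has absorbed all debts and tokens
left in rooms, and the others have nothing left to deposit. -/
theorem exists_not_idlesAt (h : Election w c) (hr : 1 ≤ r) :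
    ∃ v, ¬ (protocol n r u w).IdlesAt c v := by
  by_contra! hidle
  obtain ⟨l, hl⟩ := h.exists_charge_pos
  have hempty : ∀ ρ, c.room ρ = .empty := fun ρ => h.room_eq_empty_of_idlesAt hl (hidle (l, ρ))
  let ρ₀ : Fin r := ⟨0, hr⟩
  have hnonneg : ∀ p, 0 ≤ (c.memory p).charge :=
    fun p => (h.charge_nonneg_of_idlesAt (hidle (p, ρ₀)) (hempty ρ₀)).1
  have hzero : ∀ p, (c.memory p).charge = 0 → (c.memory p).tokens = 0 :=
    fun p => (h.charge_nonneg_of_idlesAt (hidle (p, ρ₀)) (hempty ρ₀)).2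
  have hcharge := h.charge
  rw [Config.total_eq_add _ _ _ l] at hcharge
  simp only [hempty, RoomState.charge, Finset.sum_const_zero, add_zero] at hcharge
  have hsum := Finset.sum_nonneg fun p (_ : p ∈ Finset.univ.erase l) => hnonneg p
  have hl_charge : (c.memory l).charge = 1 := by omega
  have hothers := (Finset.sum_eq_zero_iff_of_nonneg fun p _ => hnonneg p).1
    (show ∑ p ∈ Finset.univ.erase l, (c.memory p).charge = 0 by omega)
  have htokens := h.tokens
  rw [Config.total_eq_add _ _ _ l] at htokens
  simp only [hempty, RoomState.tokens, Finset.sum_const_zero, add_zero,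
    Finset.sum_eq_zero fun p hp => hzero p (hothers p hp)] at htokens
  obtain ⟨k, a, hmemory, -⟩ := h.memory l
  rw [hmemory] at hl_charge htokens
  have helected : ElectedAt c (l, ρ₀) :=
    ⟨by rw [hmemory, show k = 1 from hl_charge, show a = n from htokens], hempty ρ₀⟩
  exact helected.not_idlesAt (hidle (l, ρ₀))

end Election

end Election

/-! ### The rounds of the leader -/

section Rounds

open Function
open scoped Finset

variable {n r u w : ℕ}

/-- The memories of the prisoners other than the leader: those in `U` have not helped yet. -/
def team (U : Finset (Fin n)) : Fin n → Memory :=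
  U.piecewise (fun _ => .elect 0 0) (fun _ => .retired)

/-- The leader `l` has marked the rooms in `B`. -/
def leadConfig (l : Fin n) (U : Finset (Fin n)) (B : Finset (Fin r)) :
    Config Memory RoomState n r where
  memory := update (team U) l (.lead #U #B)
  room := B.piecewise (fun _ => .marked) (fun _ => .empty)

/-- All rooms are marked and the leader `l` has made an offer in room `g`. -/
def offerConfig (l : Fin n) (U : Finset (Fin n)) (g : Fin r) : Config Memory RoomState n r where
  memory := update (team U) l (.wait (#U - 1))
  room := update (fun _ => .marked) g .offer

/-- The helper `h` of the leader `l` has emptied the rooms in `B`. -/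
def helpConfig (l h : Fin n) (U : Finset (Fin n)) (B : Finset (Fin r)) :
    Config Memory RoomState n r where
  memory := update (update (team U) l (.wait #U)) h (.help #B)
  room := B.piecewise (fun _ => .empty) (fun _ => .marked)

/-- A helper of the leader `l` has emptied all rooms and has signalled its return in room `g`. -/
def returnConfig (l : Fin n) (U : Finset (Fin n)) (g : Fin r) : Config Memory RoomState n r where
  memory := update (team U) l (.wait #U)
  room := update (fun _ => .empty) g .returned

/-- The prisoners other than the leader `l` and those in `U` have visited every room. -/
def Served (V : Set (Fin n × Fin r)) (U : Finset (Fin n)) (l : Fin n) : Prop :=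
  ∀ q ∉ U, q ≠ l → ∀ ρ, (q, ρ) ∈ V

/-- The configurations that occur after the election, ranked by the number of prisoners that have
not helped yet and a bound on the number of changes in the current phase. -/
inductive Rounds (V : Set (Fin n × Fin r)) : Config Memory RoomState n r → ℕ ×ₗ ℕ → Prop
  | leading {l U B} (hl : l ∉ U) (hserved : Served V U l) (hB : ∀ ρ ∈ B, (l, ρ) ∈ V) :
      Rounds V (leadConfig l U B) (toLex (#U, r + 1 - #B))
  | offering {l U} (g) (hl : l ∉ U) (hserved : Served V U l) (hU : U.Nonempty) :
      Rounds V (offerConfig l U g) (toLex (#U, 0))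
  | helping {l h U B} (hl : l ∉ U) (hh : h ∉ U) (hne : h ≠ l) (hserved : Served V (insert h U) l)
      (hB : ∀ ρ ∈ B, (h, ρ) ∈ V) :
      Rounds V (helpConfig l h U B) (toLex (#U, 2 * r + 2 - #B))
  | returning {l U} (g) (hl : l ∉ U) (hserved : Served V U l) :
      Rounds V (returnConfig l U g) (toLex (#U, r + 1))

variable {V : Set (Fin n × Fin r)} {l h : Fin n} {U : Finset (Fin n)} {B : Finset (Fin r)}
  {g : Fin r} {v : Fin n × Fin r}

theorem team_idle (p : Fin n) {s : RoomState} (hfresh : s ≠ .fresh) (hoffer : s ≠ .offer) :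
    respond n r w (team U p) s = ⟨team U p, s, false⟩ := by
  by_cases hp : p ∈ U <;> cases s <;> simp_all [team, respond, negotiate]

theorem retired_idle (p : Fin n) (hp : p ∉ U) (s : RoomState) :
    respond n r w (team U p) s = ⟨team U p, s, false⟩ := by
  simp [team, hp, respond]

theorem team_erase : team (U.erase h) = update (team U) h .retired := by
  funext p
  rcases eq_or_ne p h with rfl | hp
  · simp [team]
  · simp [team, Finset.piecewise, hp]

theorem actAt_leadConfig_of_notMem {ρ : Fin r} (hρ : ρ ∉ B) :
    (protocol n r u w).actAt (leadConfig l U B) (l, ρ) = ⟨.lead #U (#B + 1), .marked, false⟩ := by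
  simp [Automaton.actAt, protocol, leadConfig, respond, hρ]

theorem actAt_leadConfig_of_mem {ρ : Fin r} (hρ : ρ ∈ B) :
    (protocol n r u w).actAt (leadConfig l U B) (l, ρ) =
      if #B = r then
        (if #U = 0 then ⟨.lead #U #B, .marked, true⟩ else ⟨.wait (#U - 1), .offer, false⟩)
      else ⟨.lead #U #B, .marked, false⟩ := by
  simp [Automaton.actAt, protocol, leadConfig, respond, hρ]

theorem idlesAt_leadConfig_of_ne (hv : v.1 ≠ l) :
    (protocol n r u w).IdlesAt (leadConfig l U B) v := by
  simp only [Automaton.IdlesAt, Automaton.actAt, leadConfig, update_of_ne hv]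
  apply team_idle <;> by_cases hρ : v.2 ∈ B <;> simp [hρ]

theorem step_leadConfig_of_notMem {ρ : Fin r} (hρ : ρ ∉ B) :
    (protocol n r u w).step (leadConfig l U B) (l, ρ) = leadConfig l U (insert ρ B) := by
  rw [Automaton.step, actAt_leadConfig_of_notMem hρ]
  simp [leadConfig, Finset.piecewise_insert, hρ]

theorem step_leadConfig_univ (hU : U.Nonempty) :
    (protocol n r u w).step (leadConfig l U Finset.univ) (l, g) = offerConfig l U g := by
  rw [Automaton.step, actAt_leadConfig_of_mem (Finset.mem_univ g)]
  simp [leadConfig, offerConfig, hU.ne_empty]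

theorem actAt_offerConfig (hh : h ∈ U) (hne : h ≠ l) :
    (protocol n r u w).actAt (offerConfig l U g) (h, g) = ⟨.help 1, .empty, false⟩ := by
  simp [Automaton.actAt, protocol, offerConfig, respond, hne, team, hh]

theorem idlesAt_offerConfig (hv : v.2 = g → v.1 ∉ U) :
    (protocol n r u w).IdlesAt (offerConfig l U g) v := by
  simp only [Automaton.IdlesAt, Automaton.actAt, protocol, offerConfig]
  rcases eq_or_ne v.1 l with hl | hl <;> rcases eq_or_ne v.2 g with hg | hg
  · simp [hl, hg, respond]
  · simp [hl, hg, respond]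
  · simpa [hl, hg] using retired_idle v.1 (hv hg) _
  · simpa [hl, hg] using team_idle v.1 (by simp) (by simp)

theorem step_offerConfig (hh : h ∈ U) (hne : h ≠ l) :
    (protocol n r u w).step (offerConfig l U g) (h, g) = helpConfig l h (U.erase h) {g} := by
  rw [Automaton.step, actAt_offerConfig hh hne]
  simp [helpConfig, offerConfig, team_erase, update_comm hne, Finset.piecewise_singleton, hh]

theorem actAt_helpConfig_of_notMem {ρ : Fin r} (hρ : ρ ∉ B) :
    (protocol n r u w).actAt (helpConfig l h U B) (h, ρ) = ⟨.help (#B + 1), .empty, false⟩ := by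
  simp [Automaton.actAt, protocol, helpConfig, respond, hρ]

theorem actAt_helpConfig_of_mem {ρ : Fin r} (hρ : ρ ∈ B) :
    (protocol n r u w).actAt (helpConfig l h U B) (h, ρ) =
      if #B = r then ⟨.retired, .returned, false⟩ else ⟨.help #B, .empty, false⟩ := by
  simp [Automaton.actAt, protocol, helpConfig, respond, hρ]

theorem idlesAt_helpConfig_of_ne (hv : v.1 ≠ h) :
    (protocol n r u w).IdlesAt (helpConfig l h U B) v := by
  simp only [Automaton.IdlesAt, Automaton.actAt, protocol, helpConfig, update_of_ne hv]
  rcases eq_or_ne v.1 l with hl | hl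
  · by_cases hρ : v.2 ∈ B <;> simp [hl, hρ, respond]
  · rw [update_of_ne hl]
    apply team_idle <;> by_cases hρ : v.2 ∈ B <;> simp [hρ]

theorem step_helpConfig_of_notMem {ρ : Fin r} (hρ : ρ ∉ B) :
    (protocol n r u w).step (helpConfig l h U B) (h, ρ) = helpConfig l h U (insert ρ B) := by
  rw [Automaton.step, actAt_helpConfig_of_notMem hρ]
  simp [helpConfig, Finset.piecewise_insert, hρ]

theorem step_helpConfig_univ (hh : h ∉ U) (hne : h ≠ l) :
    (protocol n r u w).step (helpConfig l h U Finset.univ) (h, g) = returnConfig l U g := by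
  rw [Automaton.step, actAt_helpConfig_of_mem (Finset.mem_univ g)]
  simp [helpConfig, returnConfig, update_eq_self_iff, hne, team, hh]

theorem actAt_returnConfig :
    (protocol n r u w).actAt (returnConfig l U g) (l, g) = ⟨.lead #U 1, .marked, false⟩ := by
  simp [Automaton.actAt, protocol, returnConfig, respond]

theorem idlesAt_returnConfig (hv : v ≠ (l, g)) :
    (protocol n r u w).IdlesAt (returnConfig l U g) v := by
  simp only [Automaton.IdlesAt, Automaton.actAt, protocol, returnConfig]
  rcases eq_or_ne v.1 l with hl | hl
  · have hg : v.2 ≠ g := fun hg => hv (Prod.ext hl hg)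
    simp [hl, hg, respond]
  · rw [update_of_ne hl]
    apply team_idle <;> rcases eq_or_ne v.2 g with hg | hg <;> simp [hg]

theorem step_returnConfig :
    (protocol n r u w).step (returnConfig l U g) (l, g) = leadConfig l U {g} := by
  rw [Automaton.step, actAt_returnConfig]
  simp [returnConfig, leadConfig, Finset.piecewise_singleton]

theorem Served.mono {V' : Set (Fin n × Fin r)} (hV : V ⊆ V') (h : Served V U l) :
    Served V' U l :=
  fun q hq hql ρ => hV (h q hq hql ρ)

theorem forall_mem_insert_of_forall_mem {p : Fin n} {ρ : Fin r} (hB : ∀ σ ∈ B, (p, σ) ∈ V) :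
    ∀ σ ∈ insert ρ B, (p, σ) ∈ insert (p, ρ) V := by
  intro σ hσ
  rcases Finset.mem_insert.1 hσ with rfl | hσ
  · exact Set.mem_insert _ _
  · exact Or.inr (hB σ hσ)

namespace Rounds

variable {c : Config Memory RoomState n r} {m : ℕ ×ₗ ℕ}

theorem mono {V' : Set (Fin n × Fin r)} (hV : V ⊆ V') (h : Rounds V c m) : Rounds V' c m := by
  cases h with
  | leading hl hs hB => exact .leading hl (hs.mono hV) fun ρ hρ => hV (hB ρ hρ)
  | offering g hl hs hU => exact .offering g hl (hs.mono hV) hU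
  | helping hl hh hne hs hB => exact .helping hl hh hne (hs.mono hV) fun ρ hρ => hV (hB ρ hρ)
  | returning g hl hs => exact .returning g hl (hs.mono hV)

theorem eq_univ_of_declare (h : Rounds V c m) (hdeclare : ((protocol n r u w).actAt c v).declare) :
    V = Set.univ := by
  obtain ⟨p, ρ⟩ := v
  cases h with
  | @leading l U B hl hserved hB =>
    obtain rfl : p = l := by
      by_contra hp
      exact (idlesAt_leadConfig_of_ne hp).not_declare hdeclare
    have hρ : ρ ∈ B := by
      by_contra hρ
      simp [actAt_leadConfig_of_notMem hρ] at hdeclare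
    simp only [actAt_leadConfig_of_mem hρ] at hdeclare
    have hcard : #B = r ∧ #U = 0 := by grind
    obtain rfl : B = Finset.univ := by simpa [← Finset.card_eq_iff_eq_univ] using hcard.1
    obtain rfl : U = ∅ := Finset.card_eq_zero.1 hcard.2
    ext ⟨q, σ⟩
    rcases eq_or_ne q p with rfl | hq
    · simp [hB]
    · simp [hserved q (Finset.notMem_empty q) hq σ]
  | @offering l U g hl hserved hU =>
    by_cases hhelp : ρ = g ∧ p ∈ U
    · obtain ⟨rfl, hp⟩ := hhelp
      simp [actAt_offerConfig hp (ne_of_mem_of_not_mem hp hl)] at hdeclare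
    · exact ((idlesAt_offerConfig fun hρ hp => hhelp ⟨hρ, hp⟩).not_declare hdeclare).elim
  | @helping l h U B hl hh hne hserved hB =>
    rcases eq_or_ne p h with rfl | hp
    · by_cases hρ : ρ ∈ B
      · grind [actAt_helpConfig_of_mem]
      · simp [actAt_helpConfig_of_notMem hρ] at hdeclare
    · exact ((idlesAt_helpConfig_of_ne hp).not_declare hdeclare).elim
  | @returning l U g hl hserved =>
    by_cases hv : (p, ρ) = (l, g)
    · simp [hv, actAt_returnConfig] at hdeclare
    · exact ((idlesAt_returnConfig hv).not_declare hdeclare).elim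

theorem exists_lt_step_leading (hl : l ∉ U) (hserved : Served V U l) (hB : ∀ ρ ∈ B, (l, ρ) ∈ V)
    (hidle : ¬ (protocol n r u w).IdlesAt (leadConfig l U B) v)
    (hdeclare : ((protocol n r u w).actAt (leadConfig l U B) v).declare = false) :
    ∃ m' < toLex (#U, r + 1 - #B),
      Rounds (insert v V) ((protocol n r u w).step (leadConfig l U B) v) m' := by
  obtain ⟨p, ρ⟩ := v
  obtain rfl : p = l := by
    by_contra hp
    exact hidle (idlesAt_leadConfig_of_ne hp)
  have hcard : #B ≤ r := by simpa using Finset.card_le_univ B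
  by_cases hρ : ρ ∈ B
  · rw [Automaton.IdlesAt, actAt_leadConfig_of_mem hρ] at hidle
    rw [actAt_leadConfig_of_mem hρ] at hdeclare
    have hmarked : #B = r ∧ #U ≠ 0 := by
      simp only [leadConfig, update_self, Finset.piecewise_eq_of_mem _ _ _ hρ] at hidle
      grind
    obtain rfl : B = Finset.univ := by simpa [← Finset.card_eq_iff_eq_univ] using hmarked.1
    have hU : U.Nonempty := Finset.card_ne_zero.1 hmarked.2
    rw [step_leadConfig_univ hU]
    exact ⟨_, by simp [Prod.Lex.toLex_lt_toLex],
      (offering ρ hl hserved hU).mono (Set.subset_insert _ _)⟩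
  · rw [step_leadConfig_of_notMem hρ]
    refine ⟨_, ?_, leading hl (hserved.mono (Set.subset_insert _ _))
      (forall_mem_insert_of_forall_mem hB)⟩
    refine Prod.Lex.toLex_lt_toLex.2 (.inr ⟨rfl, ?_⟩)
    simp only [Finset.card_insert_of_notMem hρ]
    omega

theorem exists_lt_step_helping (hl : l ∉ U) (hh : h ∉ U) (hne : h ≠ l)
    (hserved : Served V (insert h U) l) (hB : ∀ ρ ∈ B, (h, ρ) ∈ V)
    (hidle : ¬ (protocol n r u w).IdlesAt (helpConfig l h U B) v) :
    ∃ m' < toLex (#U, 2 * r + 2 - #B),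
      Rounds (insert v V) ((protocol n r u w).step (helpConfig l h U B) v) m' := by
  obtain ⟨p, ρ⟩ := v
  obtain rfl : p = h := by
    by_contra hp
    exact hidle (idlesAt_helpConfig_of_ne hp)
  have hcard : #B ≤ r := by simpa using Finset.card_le_univ B
  by_cases hρ : ρ ∈ B
  · have hcard_eq : #B = r := by
      by_contra hcard_ne
      apply hidle
      rw [Automaton.IdlesAt, actAt_helpConfig_of_mem hρ]
      simp [hcard_ne, helpConfig, hρ]
    obtain rfl : B = Finset.univ := by simpa [← Finset.card_eq_iff_eq_univ] using hcard_eq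
    have hserved' : Served V U l := by
      intro q hq hql σ
      rcases eq_or_ne q p with rfl | hqp
      · exact hB σ (Finset.mem_univ σ)
      · exact hserved q (by simp [hq, hqp]) hql σ
    rw [step_helpConfig_univ hh hne]
    refine ⟨_, ?_, (returning ρ hl hserved').mono (Set.subset_insert _ _)⟩
    refine Prod.Lex.toLex_lt_toLex.2 (.inr ⟨rfl, ?_⟩)
    simp only [hcard_eq]
    omega
  · rw [step_helpConfig_of_notMem hρ]
    refine ⟨_, ?_, helping hl hh hne (hserved.mono (Set.subset_insert _ _))
      (forall_mem_insert_of_forall_mem hB)⟩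
    refine Prod.Lex.toLex_lt_toLex.2 (.inr ⟨rfl, ?_⟩)
    simp only [Finset.card_insert_of_notMem hρ]
    omega

theorem exists_lt_step (hInv : Rounds V c m) (hidle : ¬ (protocol n r u w).IdlesAt c v)
    (hdeclare : ((protocol n r u w).actAt c v).declare = false) :
    ∃ m' < m, Rounds (insert v V) ((protocol n r u w).step c v) m' := by
  cases hInv with
  | leading hl hserved hB => exact exists_lt_step_leading hl hserved hB hidle hdeclare
  | @offering l U g hl hserved hU =>
    obtain ⟨rfl, hh⟩ : v.2 = g ∧ v.1 ∈ U := by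
      by_contra! hv
      exact hidle (idlesAt_offerConfig hv)
    have hne := ne_of_mem_of_not_mem hh hl
    rw [show v = (v.1, v.2) from rfl, step_offerConfig hh hne]
    refine ⟨_, ?_, helping (fun hmem => hl (Finset.mem_of_mem_erase hmem))
      (Finset.notMem_erase _ _) hne ?_ (by simp)⟩
    · have := Finset.card_pos.2 hU
      simp [Prod.Lex.toLex_lt_toLex, hh, this]
    · rw [Finset.insert_erase hh]
      exact hserved.mono (Set.subset_insert _ _)
  | helping hl hh hne hserved hB => exact exists_lt_step_helping hl hh hne hserved hB hidle
  | @returning l U g hl hserved =>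
    obtain rfl : v = (l, g) := by
      by_contra hv
      exact hidle (idlesAt_returnConfig hv)
    rw [step_returnConfig]
    refine ⟨_, ?_, leading hl (hserved.mono (Set.subset_insert _ _)) (by simp)⟩
    simp [Prod.Lex.toLex_lt_toLex]

theorem exists_not_idlesAt (hInv : Rounds V c m) (hr : 1 ≤ r) :
    ∃ v, ¬ (protocol n r u w).IdlesAt c v := by
  cases hInv with
  | @leading l U B hl hserved hB =>
    by_cases hfull : ∃ ρ, ρ ∉ B
    · obtain ⟨ρ, hρ⟩ := hfull
      exact ⟨(l, ρ), by rw [Automaton.IdlesAt, actAt_leadConfig_of_notMem hρ]; simp [leadConfig]⟩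
    · obtain rfl : B = Finset.univ := by simpa [Finset.eq_univ_iff_forall] using hfull
      refine ⟨(l, ⟨0, hr⟩), ?_⟩
      rw [Automaton.IdlesAt, actAt_leadConfig_of_mem (Finset.mem_univ _)]
      simp only [leadConfig, Finset.card_univ, Fintype.card_fin, if_true, update_self]
      split_ifs <;> simp
  | offering g hl hserved hU =>
    obtain ⟨h, hh⟩ := hU
    have hne := ne_of_mem_of_not_mem hh hl
    exact ⟨(h, g), by rw [Automaton.IdlesAt, actAt_offerConfig hh hne]; simp [offerConfig]⟩
  | @helping l h U B hl hh hne hserved hB =>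
    by_cases hfull : ∃ ρ, ρ ∉ B
    · obtain ⟨ρ, hρ⟩ := hfull
      exact ⟨(h, ρ), by rw [Automaton.IdlesAt, actAt_helpConfig_of_notMem hρ]; simp [helpConfig]⟩
    · obtain rfl : B = Finset.univ := by simpa [Finset.eq_univ_iff_forall] using hfull
      refine ⟨(h, ⟨0, hr⟩), ?_⟩
      rw [Automaton.IdlesAt, actAt_helpConfig_of_mem (Finset.mem_univ _)]
      simp [helpConfig]
  | @returning l U g hl hserved =>
    exact ⟨(l, g), by rw [Automaton.IdlesAt, actAt_returnConfig]; simp [returnConfig]⟩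

end Rounds

/-! ### The protocol wins -/

/-- The invariant of the protocol, with ranks: an election among `n` candidates, followed by the
rounds of the leader. -/
def Invariant (w : ℕ) (V : Set (Fin n × Fin r)) (c : Config Memory RoomState n r) (m : ℕ ×ₗ ℕ) :
    Prop :=
  (Election w c ∧ m = toLex (n, c.total (Memory.potential n) (RoomState.potential n w))) ∨
    Rounds V c m

theorem Election.step_eq_leadConfig {c : Config Memory RoomState n r} (h : Election w c)
    (hw : 1 ≤ w) (hv : ElectedAt c v) :
    (protocol n r u w).step c v = leadConfig v.1 (Finset.univ.erase v.1) {v.2} := by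
  obtain ⟨hmemory, hroom⟩ := h.elected hw hv.1
  rw [Automaton.step, hv.actAt_eq]
  have hroom_eq : c.room = fun _ => .empty := funext hroom
  ext1
  · funext p
    rcases eq_or_ne p v.1 with rfl | hp
    · simp [leadConfig]
    · simp [leadConfig, team, hp, hmemory]
  · simp [leadConfig, Finset.piecewise_singleton, hroom_eq]

theorem Election.rounds_step {c : Config Memory RoomState n r} (h : Election w c) (hw : 1 ≤ w)
    (hv : ElectedAt c v) :
    Rounds (insert v V) ((protocol n r u w).step c v) (toLex (n - 1, r)) := by
  have hrounds : Rounds (insert v V) (leadConfig v.1 (Finset.univ.erase v.1) {v.2}) _ :=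
    .leading (Finset.notMem_erase _ _) (by simp [Served]) (by simp)
  rw [h.step_eq_leadConfig hw hv]
  simpa using hrounds

theorem rankedInvariant_protocol (hr : 1 ≤ r) (hw : 1 ≤ w) (huw : u * n = w * r + 1) :
    (protocol n r u w).RankedInvariant n r (Invariant w) where
  start := ⟨_, .inl ⟨.start huw, rfl⟩⟩
  mono hV hInv := hInv.imp_right (Rounds.mono hV)
  safe := by
    rintro V c m v (⟨h, -⟩ | h) hdeclare
    · exact (h.not_declare hdeclare).elim
    · simp [h.eq_univ_of_declare hdeclare]
  progress := by
    rintro V c m v (⟨h, rfl⟩ | h) hidle hdeclare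
    · by_cases hv : ElectedAt c v
      · refine ⟨_, ?_, .inr (h.rounds_step hw hv)⟩
        have hn : 0 < n := v.1.pos
        exact Prod.Lex.toLex_lt_toLex.2 (.inl (Nat.sub_one_lt hn.ne'))
      · refine ⟨_, ?_, .inl ⟨h.step hv, rfl⟩⟩
        exact Prod.Lex.toLex_lt_toLex.2 (.inr ⟨rfl, h.total_potential_step_lt hv hidle⟩)
    · obtain ⟨m', hlt, hInv⟩ := h.exists_lt_step hidle hdeclare
      exact ⟨m', hlt, .inr hInv⟩
  live := by
    rintro V c m (⟨h, -⟩ | h)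
    · exact h.exists_not_idlesAt hr
    · exact h.exists_not_idlesAt hr

end Rounds

theorem exists_mul_eq_mul_add_one {n r : ℕ} (hn : 1 ≤ n) (h : n.Coprime r) :
    ∃ u w : ℕ, 1 ≤ w ∧ u * n = w * r + 1 := by
  obtain ⟨a, b, hab⟩ := Nat.isCoprime_iff_coprime.2 h
  have hw : 1 ≤ (|b| + 1) * n - b := by
    nlinarith [le_abs_self b, abs_nonneg b, (by exact_mod_cast hn : (1 : ℤ) ≤ n)]
  have huw : (a + (|b| + 1) * r) * n = ((|b| + 1) * n - b) * r + 1 := by linear_combination hab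
  have hu : 0 < a + (|b| + 1) * r := by
    refine pos_of_mul_pos_left ?_ (Int.natCast_nonneg n)
    rw [huw]
    positivity
  lift (|b| + 1) * n - b to ℕ using by omega with w
  lift a + (|b| + 1) * r to ℕ using hu.le with u
  exact ⟨u, w, by exact_mod_cast hw, by exact_mod_cast huw⟩

theorem hasSymmetricWinningStrategy_of_coprime {n r q : ℕ} (hn : 1 ≤ n) (hr : 1 ≤ r)
    (h : n.Coprime r) (hq : 7 ≤ q) : HasSymmetricWinningStrategy n r q := by
  obtain ⟨u, w, hw, huw⟩ := exists_mul_eq_mul_add_one hn h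
  exact (rankedInvariant_protocol hr hw huw).wins.hasSymmetricWinningStrategy hq

end PrisonersGame

open PrisonersGame in
theorem symmetric_iff_coprime_general {n r : ℕ} (hn : 1 ≤ n) (hr : 1 ≤ r) :
    [n.Coprime r, ∀ q ≥ 7, HasSymmetricWinningStrategy n r q,
      ∃ q, HasSymmetricWinningStrategy n r q].TFAE := by
  tfae_have 1 → 2 := fun h _ hq => hasSymmetricWinningStrategy_of_coprime hn hr h hq
  tfae_have 2 → 3 := fun h => ⟨7, h 7 le_rfl⟩
  tfae_have 3 → 1 := fun ⟨_, h⟩ => h.coprime hn hr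
  tfae_finish

open PrisonersGame in
/-- For `n ≥ 1` prisoners and `r ≥ 1` rooms, the prisoners have a symmetric
winning strategy for some number of states `q` if and only if `gcd(n, r) = 1`.
Furthermore, there is a function `f` such that whenever `gcd(n, r) = 1`, the
prisoners have a symmetric winning strategy for any `q ≥ f (min n r)`. -/
theorem symmetric_iff_coprime :
    (∀ n r : ℕ, 1 ≤ n → 1 ≤ r →
      ((∃ q, HasSymmetricWinningStrategy n r q) ↔ Nat.gcd n r = 1)) ∧
    ∃ f : ℕ → ℕ, ∀ n r : ℕ, 1 ≤ n → 1 ≤ r → Nat.gcd n r = 1 →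
      ∀ q, f (min n r) ≤ q → HasSymmetricWinningStrategy n r q := by
  refine ⟨fun n r hn hr => (symmetric_iff_coprime_general hn hr).out 2 0, fun _ => 7, ?_⟩
  exact fun n r hn hr => ((symmetric_iff_coprime_general hn hr).out 0 1).1
end

section
/- For every n ≥ 1 there exists q = q(n) such that for every r > n with gcd(n, r) = 1, the n prisoners have a symmetric winning strategy for r rooms with q states. -/
/-!
Tell every prisoner to carry *weight* 1 initially and put one *flag* in every room. A prisoner who
still competes collects all the weight and all the flags lying in the rooms it visits, and writes
its *level* on the wall: its weight `e` and, to break ties, whether its number `c` of flags is at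
least its fair share, `r * e ≤ n * c`. A prisoner who reads a higher level than its own retires,
leaves its weight behind, and from then on only puts its flags back into rooms without one. If
everybody's memory has become constant, all competitors have the same level and hold together the
weight `n` and the `r` flags. Being all below or all above their fair share, they all have exactly
their fair share: `r * e = n * c`. Coprimality gives `n ∣ e`, so one prisoner holds the whole
weight, and it knows that it is the only competitor left.

This leader raises all rooms from height 0 to height 1 and leaves a token in the last of them. The
finder of the token raises all rooms to height 2, and so on; nobody does this twice. Hence a room
of height `n` has been visited by all prisoners, and a token at height `n` allows one to declare.
-/

namespace PrisonersGame

open Finset Function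

theorem sum_comp_update_add {ι α M : Type*} [Fintype ι] [DecidableEq ι] [AddCommMonoid M]
    (f : α → M) (g : ι → α) (i : ι) (a : α) :
    ∑ x, f (update g i a x) + f (g i) = ∑ x, f (g x) + f a := by
  have hcongr : ∑ x ∈ univ.erase i, f (update g i a x) = ∑ x ∈ univ.erase i, f (g x) :=
    sum_congr rfl fun x hx => by rw [update_of_ne (ne_of_mem_erase hx)]
  rw [← sum_erase_add univ _ (mem_univ i), hcongr, update_self,
    ← sum_erase_add univ (fun x => f (g x)) (mem_univ i), add_right_comm]

theorem forall_eq_of_sum_eq {ι : Type*} [Fintype ι] {f g : ι → ℕ} (hsum : ∑ i, f i = ∑ i, g i)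
    (hle : (∀ i, f i ≤ g i) ∨ ∀ i, g i ≤ f i) (i : ι) : f i = g i :=
  hle.elim (fun h => (sum_eq_sum_iff_of_le fun i _ => h i).1 hsum i (mem_univ i))
    fun h => ((sum_eq_sum_iff_of_le fun i _ => h i).1 hsum.symm i (mem_univ i)).symm

theorem exists_coding {S : Type*} [Countable S] {G : Set S} (hG : G.Finite) (s₀ : S) :
    ∃ (code : S → ℕ) (decode : ℕ → S) (q : ℕ), LeftInverse decode code ∧ code s₀ = 0 ∧ 0 < q ∧
      ∀ s ∈ G, code s < q := by
  obtain ⟨f, hf⟩ := Countable.exists_injective_nat S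
  let code := Equiv.swap (f s₀) 0 ∘ f
  obtain ⟨B, hB⟩ := (hG.image code).bddAbove
  have : Nonempty S := ⟨s₀⟩
  exact ⟨code, invFun code, B + 1, leftInverse_invFun ((Equiv.injective _).comp hf),
    Equiv.swap_apply_left _ _, B.succ_pos,
    fun s hs => Nat.lt_succ_of_le (hB (Set.mem_image_of_mem code hs))⟩

/-! ### Protocols with abstract memories and room states -/

/-- The rules of a symmetric strategy, with memories in `M` instead of lists of observations and
room states in `S` instead of numbers: an initial memory and room state, the reaction of a
prisoner to the state of the room, and the room states on which it declares. -/
structure Protocol (M S : Type*) where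
  mem₀ : M
  room₀ : S
  act : M → S → M × S
  declares : S → Bool

/-- A position of the game: the states of the `r` rooms and the memories of the `n` prisoners. -/
structure Config_s8 (M S : Type*) (n r : ℕ) where
  rooms : Fin r → S
  mems : Fin n → M

section Protocol

variable {M S : Type*} {n r q T : ℕ}

/-- The position after prisoner `p` has been in room `y`, if `p` now has memory `P` and `y` is
left in state `s`. -/
@[simps -fullyApplied]
def Config_s8.update (C : Config_s8 M S n r) (p : Fin n) (y : Fin r) (P : M) (s : S) :
    Config_s8 M S n r where
  rooms := Function.update C.rooms y s
  mems := Function.update C.mems p P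

namespace Protocol

variable (π : Protocol M S)

/-- The position just before step `t` when all prisoners follow `π`. -/
def exec (sched : Schedule n r) : ℕ → Config_s8 M S n r
  | 0 => ⟨fun _ => π.room₀, fun _ => π.mem₀⟩
  | t + 1 =>
      let C := exec sched t
      let P := C.mems (sched t).1
      let s := C.rooms (sched t).2
      C.update (sched t).1 (sched t).2 (π.act P s).1 (π.act P s).2

/-- The memory resulting from a list of observed (coded) room states. -/
def replay (decode : ℕ → S) (h : List ℕ) : M :=
  h.foldl (fun P s => (π.act P (decode s)).1) π.mem₀

/-- The strategy that follows `π`, with room states coded by numbers. The reduction modulo `q`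
makes it valid for `q` states; it has no effect as long as the codes occurring are below `q`. -/
def toStrategy (code : S → ℕ) (decode : ℕ → S) (q : ℕ) : Strategy := fun h s =>
  (code (π.act (π.replay decode h) (decode s)).2 % q, π.declares (decode s))

variable {π} {code : S → ℕ} {decode : ℕ → S} {sched : Schedule n r}

theorem run_toStrategy (hdecode : LeftInverse decode code) (h₀ : code π.room₀ = 0)
    (hq : ∀ t y, code ((π.exec sched t).rooms y) < q) (t : ℕ) :
    (∀ y, (run (fun _ => π.toStrategy code decode q) sched t).1 y =
      code ((π.exec sched t).rooms y)) ∧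
    ∀ p, π.replay decode ((run (fun _ => π.toStrategy code decode q) sched t).2 p) =
      (π.exec sched t).mems p := by
  induction t with
  | zero => exact ⟨fun _ => h₀.symm, fun _ => rfl⟩
  | succ t ih =>
    obtain ⟨ihRooms, ihMems⟩ := ih
    refine ⟨fun y => ?_, fun p => ?_⟩
    · rcases eq_or_ne y (sched t).2 with rfl | hy
      · have hlt := hq (t + 1) (sched t).2
        simp only [exec, Config_s8.update_rooms, update_self] at hlt
        simp [run, exec, toStrategy, ihRooms, ihMems, hdecode _, Nat.mod_eq_of_lt hlt]
      · simp [run, exec, hy, ihRooms]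
    · rcases eq_or_ne p (sched t).1 with rfl | hp
      · simp [run, exec, replay, ihRooms, ← ihMems, hdecode _]
      · simp [run, exec, hp, ihMems]

theorem hasSymmetricWinningStrategy (hdecode : LeftInverse decode code) (h₀ : code π.room₀ = 0)
    (hpos : 0 < q)
    (hq : ∀ (sched : Schedule n r) (t : ℕ) (y : Fin r), code ((π.exec sched t).rooms y) < q)
    (hlive : ∀ sched : Schedule n r, sched.Fair →
      ∃ t, π.declares ((π.exec sched t).rooms (sched t).2))
    (hsafe : ∀ (sched : Schedule n r) (t : ℕ),
      π.declares ((π.exec sched t).rooms (sched t).2) → allVisitedBy sched t) :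
    HasSymmetricWinningStrategy n r q := by
  refine ⟨π.toStrategy code decode q, fun h s _ _ => Nat.mod_lt _ hpos, fun sched hfair => ?_⟩
  have hdeclares : ∀ t, declaresAt (fun _ => π.toStrategy code decode q) sched t ↔
      π.declares ((π.exec sched t).rooms (sched t).2) := fun t => by
    simp [declaresAt, (run_toStrategy hdecode h₀ (hq sched) t).1, toStrategy, hdecode _]
  simpa only [hdeclares] using ⟨hlive sched hfair, hsafe sched⟩

variable (π) in
/-- From time `T` on, no prisoner's memory changes when all prisoners follow `π`. -/
def Quiescent (sched : Schedule n r) (T : ℕ) : Prop :=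
  ∀ t, T ≤ t → (π.exec sched t).mems = (π.exec sched T).mems

theorem Quiescent.exec_succ_rooms (hT : π.Quiescent sched T) {t : ℕ} (ht : T ≤ t) :
    (π.exec sched (t + 1)).rooms = Function.update (π.exec sched t).rooms (sched t).2
      (π.act ((π.exec sched T).mems (sched t).1) ((π.exec sched t).rooms (sched t).2)).2 := by
  simp [exec, hT t ht]

theorem Quiescent.act_fst (hT : π.Quiescent sched T) {t : ℕ} (ht : T ≤ t) :
    (π.act ((π.exec sched T).mems (sched t).1) ((π.exec sched t).rooms (sched t).2)).1 =
      (π.exec sched T).mems (sched t).1 := by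
  have hmem := congrFun (hT (t + 1) (by omega)) (sched t).1
  simpa [exec, hT t ht] using hmem

theorem Quiescent.exists_visit (hT : π.Quiescent sched T) (hfair : sched.Fair) (p : Fin n)
    (y : Fin r) {t₀ : ℕ} (ht₀ : T ≤ t₀) :
    ∃ t, t₀ ≤ t ∧
      (π.act ((π.exec sched T).mems p) ((π.exec sched t).rooms y)).1 = (π.exec sched T).mems p ∧
      (π.exec sched (t + 1)).rooms y =
        (π.act ((π.exec sched T).mems p) ((π.exec sched t).rooms y)).2 := by
  obtain ⟨t, hvisit, ht⟩ := (hfair p y).exists_gt t₀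
  have hact := hT.act_fst (ht₀.trans ht.le)
  have hrooms := hT.exec_succ_rooms (ht₀.trans ht.le)
  rw [hvisit] at hact hrooms
  exact ⟨t, ht.le, hact, by rw [hrooms, update_self]⟩

/-- A position in which a potential is minimal is followed by no change of memory. -/
theorem exists_quiescent (potential : M → ℕ)
    (hpot : ∀ t, let P := (π.exec sched t).mems (sched t).1
      let P' := (π.act P ((π.exec sched t).rooms (sched t).2)).1
      P' = P ∨ potential P' < potential P) :
    ∃ T, π.Quiescent sched T := by
  let total t := ∑ p, potential ((π.exec sched t).mems p)
  have hstep t : (π.exec sched (t + 1)).mems = (π.exec sched t).mems ∨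
      total (t + 1) < total t := by
    refine (hpot t).imp (fun heq => by simp [exec, heq]) fun hlt => ?_
    have hsum := sum_comp_update_add potential (π.exec sched t).mems (sched t).1
      (π.act ((π.exec sched t).mems (sched t).1) ((π.exec sched t).rooms (sched t).2)).1
    simp only [total, exec, Config_s8.update_mems]
    omega
  let T := argmin total
  refine ⟨T, fun t ht => ?_⟩
  induction t, ht using Nat.le_induction with
  | base => rfl
  | succ t _ ih =>
    refine ((hstep t).resolve_right fun hlt => ?_).trans ih
    have hmin : total T ≤ total (t + 1) := argmin_le total (t + 1)
    have htotal : total t = total T := by simp only [total, ih]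
    omega

end Protocol

end Protocol

/-! ### Election and counting -/

/-- What a prisoner remembers: a competitor (`active`) of weight `e` with `c` flags, a `retired`
competitor with `c` flags left, the prisoner `raising` the rooms to height `j` who, after the next
room, has `k` more of them to raise, or a prisoner `finished` with raising the rooms to height
`j`. -/
inductive Memory_s8
  | active (e c : ℕ)
  | retired (c : ℕ)
  | raising (j k : ℕ)
  | finished (j : ℕ)

/-- A room during the `election`, with a flag if `f`, with weight `D` left behind by retired
prisoners, and with the mark `m` on the wall; or a room `raised` to height `h`, with the token if
`τ`. -/
inductive RoomState_s8
  | election (f : Bool) (D m : ℕ)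
  | raised (h : ℕ) (τ : Bool)
  deriving DecidableEq, Countable

namespace Memory_s8

/-- The weight held by a prisoner. -/
@[simp] def weight : Memory_s8 → ℕ
  | active e _ => e
  | _ => 0

/-- The number of flags held by a prisoner. -/
@[simp] def flags : Memory_s8 → ℕ
  | active _ c => c
  | retired c => c
  | _ => 0

/-- `1` for a prisoner who has finished raising the rooms, `0` for others. -/
@[simp] def finishedCount : Memory_s8 → ℕ
  | finished _ => 1
  | _ => 0

/-- The height to which a prisoner raises or has raised the rooms, with `0` for no height. -/
@[simp] def rank : Memory_s8 → ℕ
  | raising j _ => j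
  | finished j => j
  | _ => 0

/-- The memories that occur during the election. -/
@[simp] def IsElector : Memory_s8 → Prop
  | active e _ => 0 < e
  | retired _ => True
  | _ => False

/-- After the election, the memories of the prisoners who are not raising the rooms. -/
@[simp] def IsBystander : Memory_s8 → Prop
  | retired _ => True
  | finished _ => True
  | _ => False

theorem IsElector.finishedCount_eq_zero {P : Memory_s8} (hP : P.IsElector) : P.finishedCount = 0 := by
  cases P <;> simp_all

end Memory_s8

namespace RoomState_s8

/-- The number of flags in a room. -/
@[simp] def flags : RoomState_s8 → ℕ
  | election f _ _ => f.toNat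
  | _ => 0

/-- The weight left in a room. -/
@[simp] def deposit : RoomState_s8 → ℕ
  | election _ D _ => D
  | _ => 0

/-- The level written on the wall of a room. -/
@[simp] def mark : RoomState_s8 → ℕ
  | election _ _ m => m
  | _ => 0

/-- The height of a room, `0` during the election. -/
@[simp] def height : RoomState_s8 → ℕ
  | raised h _ => h
  | _ => 0

/-- Whether the token is in a room. -/
@[simp] def token : RoomState_s8 → Bool
  | raised _ τ => τ
  | _ => false

/-- The room states that occur during the election. -/
@[simp] def IsElection : RoomState_s8 → Prop
  | election _ _ _ => True
  | _ => False

theorem IsElection.height_eq_zero {S : RoomState_s8} (hS : S.IsElection) : S.height = 0 := by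
  cases S <;> simp_all

theorem IsElection.token_eq_false {S : RoomState_s8} (hS : S.IsElection) : S.token = false := by
  cases S <;> simp_all

/-- The finitely many room states needed by `n` prisoners. -/
@[simp] def Bounded (n : ℕ) : RoomState_s8 → Prop
  | election _ D m => D ≤ n ∧ m ≤ 2 * n + 1
  | raised h _ => h ≤ n

/-- `S.MarkLE S'` if `S` and `S'` agree up to a higher mark in `S'`. This is the only change a
room undergoes once the memories are constant. -/
inductive MarkLE : RoomState_s8 → RoomState_s8 → Prop
  | election (f : Bool) (D : ℕ) {m m' : ℕ} : m ≤ m' → MarkLE (election f D m) (election f D m')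
  | raised (h : ℕ) (τ : Bool) : MarkLE (raised h τ) (raised h τ)

theorem MarkLE.refl (S : RoomState_s8) : S.MarkLE S := by
  cases S with
  | election f D m => exact .election f D le_rfl
  | raised h τ => exact .raised h τ

theorem MarkLE.trans {S S' S'' : RoomState_s8} (h : S.MarkLE S') (h' : S'.MarkLE S'') :
    S.MarkLE S'' := by
  cases h with
  | election f D hm => cases h' with | election _ _ hm' => exact .election f D (hm.trans hm')
  | raised h τ => exact h'

theorem MarkLE.mark_le {S S' : RoomState_s8} (h : S.MarkLE S') : S.mark ≤ S'.mark := by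
  cases h with
  | election _ _ hm => exact hm
  | raised => exact le_rfl

theorem MarkLE.height_eq {S S' : RoomState_s8} (h : S.MarkLE S') : S.height = S'.height := by
  cases h <;> rfl

theorem MarkLE.isElection {S S' : RoomState_s8} (h : S.MarkLE S') (hS : S.IsElection) :
    S'.IsElection := by
  cases h with
  | election => trivial
  | raised => exact hS

theorem MarkLE.eq_of_raised {S : RoomState_s8} {h : ℕ} {τ : Bool}
    (hS : (RoomState_s8.raised h τ).MarkLE S) : S = .raised h τ := by
  cases hS; rfl

theorem MarkLE.exists_eq_election {S : RoomState_s8} {f : Bool} {D m : ℕ}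
    (hS : S.MarkLE (.election f D m)) : ∃ m', S = .election f D m' := by
  cases hS; exact ⟨_, rfl⟩

theorem finite_setOf_bounded (n : ℕ) : {S : RoomState_s8 | S.Bounded n}.Finite := by
  have hfin : ((fun x : Bool × ℕ × ℕ => election x.1 x.2.1 x.2.2) ''
        (Set.univ ×ˢ Set.Iic n ×ˢ Set.Iic (2 * n + 1)) ∪
      (fun x : ℕ × Bool => raised x.1 x.2) '' (Set.Iic n ×ˢ Set.univ)).Finite :=
    ((Set.finite_univ.prod ((Set.finite_Iic _).prod (Set.finite_Iic _))).image _).union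
      (((Set.finite_Iic _).prod Set.finite_univ).image _)
  refine hfin.subset ?_
  rintro (⟨f, D, m⟩ | ⟨h, τ⟩) hS
  · exact .inl ⟨(f, D, m), ⟨trivial, hS⟩, rfl⟩
  · exact .inr ⟨(h, τ), ⟨hS, trivial⟩, rfl⟩

end RoomState_s8

open Memory_s8 RoomState_s8

/-- The level of a competitor of weight `e` with `c` flags: the weight, with ties broken in favour
of those whose number of flags is at least the fair share `r * e / n`. -/
def level (n r e c : ℕ) : ℕ := 2 * e + if r * e ≤ n * c then 1 else 0

theorem level_le (n r e c : ℕ) : level n r e c ≤ 2 * e + 1 := by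
  unfold level; split_ifs <;> omega

theorem level_mono (n r : ℕ) {e e' c c' : ℕ} (he : e ≤ e') (hc : c ≤ c') :
    level n r e c ≤ level n r e' c' := by
  have hnc := Nat.mul_le_mul_left n hc
  rcases he.eq_or_lt with rfl | hlt <;> unfold level <;> split_ifs <;> omega

theorem fairShare_le_iff_of_level_eq {n r e e' c c' : ℕ}
    (h : level n r e c = level n r e' c') : r * e ≤ n * c ↔ r * e' ≤ n * c' := by
  unfold level at h; split_ifs at h <;> omega

/-- The reaction of a prisoner to a room: its new memory and the new state of the room. -/
def act (n r : ℕ) : Memory_s8 → RoomState_s8 → Memory_s8 × RoomState_s8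
  | active e c, election f D m =>
      if level n r e c < m then (retired c, election f (D + e) m)
      else if n ≤ e + D then (raising 1 (r - 1), election f D m)
      else (active (e + D) (c + f.toNat),
        election false 0 (level n r (e + D) (c + f.toNat)))
  | retired (c + 1), election false D m => (retired c, election true D m)
  | retired _, raised h true => (raising (h + 1) (r - 1), raised h false)
  | raising j 0, S => if S.height + 1 = j then (finished j, raised j true) else (raising j 0, S)
  | raising j (k + 1), S =>
      if S.height + 1 = j then (raising j k, raised j false) else (raising j (k + 1), S)
  | P, S => (P, S)

/-- The election followed by the counting of the prisoners. -/
def electAndCount (n r : ℕ) : Protocol Memory_s8 RoomState_s8 where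
  mem₀ := active 1 0
  room₀ := election true 0 0
  act := act n r
  declares S := decide (S = raised n true)

section Invariants

variable {n r : ℕ} {C : Config_s8 Memory_s8 RoomState_s8 n r} {p : Fin n} {y : Fin r}

/-- The invariant of the election phase. -/
structure Election_s8 (C : Config_s8 Memory_s8 RoomState_s8 n r) : Prop where
  mem : ∀ p, (C.mems p).IsElector
  room : ∀ y, (C.rooms y).IsElection
  weight : ∑ p, (C.mems p).weight + ∑ y, (C.rooms y).deposit = n
  flags : ∑ p, (C.mems p).flags + ∑ y, (C.rooms y).flags = r
  leader : ∃ p e c, C.mems p = active e c ∧ ∀ y, (C.rooms y).mark ≤ level n r e c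

/-- The invariant of the counting phase while prisoner `p` raises the rooms to height `J`, with
`k` rooms left after the next. Rooms not yet entered since the election count as height `0`. -/
structure Raising (C : Config_s8 Memory_s8 RoomState_s8 n r) (p : Fin n) (J k : ℕ) : Prop where
  mem : C.mems p = raising J k
  bystander : ∀ q ≠ p, (C.mems q).IsBystander
  finished : ∑ q, (C.mems q).finishedCount + 1 = J
  room : ∀ y, J ≤ (C.rooms y).height + 1 ∧ (C.rooms y).height ≤ J ∧ (C.rooms y).token = false
  bounded : ∀ y, (C.rooms y).Bounded n
  height : ∑ y, (C.rooms y).height + k + 1 = J * r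

/-- The invariant of the counting phase while all rooms have height `J` and the token lies in
room `y`. -/
structure Resting (C : Config_s8 Memory_s8 RoomState_s8 n r) (y : Fin r) (J : ℕ) : Prop where
  bystander : ∀ p, (C.mems p).IsBystander
  finished : ∑ p, (C.mems p).finishedCount = J
  room : ∀ x, C.rooms x = raised J (decide (x = y))

/-- The invariant of the whole game. -/
inductive Invariant_s8 (C : Config_s8 Memory_s8 RoomState_s8 n r) : Prop
  | election : Election_s8 C → Invariant_s8 C
  | raising (p : Fin n) (J k : ℕ) : Raising C p J k → Invariant_s8 C
  | resting (y : Fin r) (J : ℕ) : Resting C y J → Invariant_s8 C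

theorem mark_update_le {l m D : ℕ} {f : Bool} (hnew : m ≤ l) (hold : ∀ x, (C.rooms x).mark ≤ l) :
    ∀ x, (update C.rooms y (.election f D m) x).mark ≤ l :=
  (forall_update_iff C.rooms fun _ S => S.mark ≤ l).2 ⟨hnew, fun x _ => hold x⟩

namespace Election_s8

theorem initial (p : Fin n) :
    Election_s8 (⟨fun _ => .election true 0 0, fun _ => active 1 0⟩ : Config_s8 Memory_s8 RoomState_s8 n r)
    where
  mem _ := Nat.one_pos
  room _ := trivial
  weight := by simp
  flags := by simp
  leader := ⟨p, 1, 0, rfl, fun _ => Nat.zero_le _⟩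

theorem weight_add_deposit_le (h : Election_s8 C) (p : Fin n) (y : Fin r) :
    (C.mems p).weight + (C.rooms y).deposit ≤ n :=
  (add_le_add (single_le_sum_of_canonicallyOrdered (f := fun p => (C.mems p).weight) (mem_univ p))
    (single_le_sum_of_canonicallyOrdered (f := fun y => (C.rooms y).deposit)
      (mem_univ y))).trans_eq h.weight

theorem flags_add_flags_le (h : Election_s8 C) (p : Fin n) (y : Fin r) :
    (C.mems p).flags + (C.rooms y).flags ≤ r :=
  (add_le_add (single_le_sum_of_canonicallyOrdered (f := fun p => (C.mems p).flags) (mem_univ p))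
    (single_le_sum_of_canonicallyOrdered (f := fun y => (C.rooms y).flags)
      (mem_univ y))).trans_eq h.flags

theorem bounded (h : Election_s8 C) (y : Fin r) : (C.rooms y).Bounded n := by
  obtain ⟨p, e, c, hp, hmark⟩ := h.leader
  have hweight := h.weight_add_deposit_le p y
  have hlevel := (hmark y).trans (level_le n r e c)
  have hroom := h.room y
  rw [hp] at hweight
  cases hy : C.rooms y with
  | raised => simp [hy] at hroom
  | election f D m =>
    simp only [hy, Memory_s8.weight, RoomState_s8.deposit, mark, Bounded] at *
    omega

theorem retire (h : Election_s8 C) {e c D m : ℕ} {f : Bool} (hp : C.mems p = active e c)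
    (hy : C.rooms y = .election f D m) (hlt : level n r e c < m) :
    Election_s8 (C.update p y (retired c) (.election f (D + e) m)) where
  mem := (forall_update_iff C.mems fun _ P => P.IsElector).2 ⟨trivial, fun q _ => h.mem q⟩
  room := (forall_update_iff C.rooms fun _ S => S.IsElection).2 ⟨trivial, fun x _ => h.room x⟩
  weight := by
    have hmems := sum_comp_update_add Memory_s8.weight C.mems p (retired c)
    have hrooms := sum_comp_update_add RoomState_s8.deposit C.rooms y (.election f (D + e) m)
    have := h.weight
    simp only [hp, hy, Memory_s8.weight, RoomState_s8.deposit, Config_s8.update] at *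
    omega
  flags := by
    have hmems := sum_comp_update_add Memory_s8.flags C.mems p (retired c)
    have hrooms := sum_comp_update_add RoomState_s8.flags C.rooms y (.election f (D + e) m)
    have := h.flags
    simp only [hp, hy, Memory_s8.flags, RoomState_s8.flags, Config_s8.update] at *
    omega
  leader := by
    obtain ⟨q, e', c', hq, hmark⟩ := h.leader
    have hmark_y : m ≤ level n r e' c' := by simpa [hy] using hmark y
    have hne : q ≠ p := by
      rintro rfl
      obtain ⟨rfl, rfl⟩ : e = e' ∧ c = c' := by simpa [hp] using hq
      omega
    exact ⟨q, e', c', by simp [hne, hq], mark_update_le hmark_y hmark⟩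

theorem collect (h : Election_s8 C) {e c D m : ℕ} {f : Bool} (hp : C.mems p = active e c)
    (hy : C.rooms y = .election f D m) :
    Election_s8 (C.update p y (active (e + D) (c + f.toNat))
      (.election false 0 (level n r (e + D) (c + f.toNat)))) where
  mem := by
    have := h.mem p
    refine (forall_update_iff C.mems fun _ P => P.IsElector).2 ⟨?_, fun q _ => h.mem q⟩
    simp only [hp, IsElector] at *
    omega
  room := (forall_update_iff C.rooms fun _ S => S.IsElection).2 ⟨trivial, fun x _ => h.room x⟩
  weight := by
    have hmems := sum_comp_update_add Memory_s8.weight C.mems p (active (e + D) (c + f.toNat))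
    have hrooms := sum_comp_update_add RoomState_s8.deposit C.rooms y
      (.election false 0 (level n r (e + D) (c + f.toNat)))
    have := h.weight
    simp only [hp, hy, Memory_s8.weight, RoomState_s8.deposit, Config_s8.update] at *
    omega
  flags := by
    have hmems := sum_comp_update_add Memory_s8.flags C.mems p (active (e + D) (c + f.toNat))
    have hrooms := sum_comp_update_add RoomState_s8.flags C.rooms y
      (.election false 0 (level n r (e + D) (c + f.toNat)))
    have := h.flags
    simp only [hp, hy, Memory_s8.flags, RoomState_s8.flags, Config_s8.update, Bool.toNat_false] at *
    omega
  leader := by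
    obtain ⟨q, e', c', hq, hmark⟩ := h.leader
    rcases le_total (level n r e' c') (level n r (e + D) (c + f.toNat)) with hle | hle
    · exact ⟨p, _, _, update_self .., mark_update_le le_rfl fun x => (hmark x).trans hle⟩
    · rcases eq_or_ne q p with rfl | hne
      · obtain ⟨rfl, rfl⟩ : e = e' ∧ c = c' := by simpa [hp] using hq
        exact ⟨q, _, _, update_self .., mark_update_le le_rfl fun x =>
          (hmark x).trans (level_mono n r (Nat.le_add_right ..) (Nat.le_add_right ..))⟩
      · exact ⟨q, e', c', by simp [hne, hq], mark_update_le hle hmark⟩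

theorem returnFlag (h : Election_s8 C) {c D m : ℕ} (hp : C.mems p = retired (c + 1))
    (hy : C.rooms y = .election false D m) :
    Election_s8 (C.update p y (retired c) (.election true D m)) where
  mem := (forall_update_iff C.mems fun _ P => P.IsElector).2 ⟨trivial, fun q _ => h.mem q⟩
  room := (forall_update_iff C.rooms fun _ S => S.IsElection).2 ⟨trivial, fun x _ => h.room x⟩
  weight := by
    have hmems := sum_comp_update_add Memory_s8.weight C.mems p (retired c)
    have hrooms := sum_comp_update_add RoomState_s8.deposit C.rooms y (.election true D m)
    have := h.weight
    simp only [hp, hy, Memory_s8.weight, RoomState_s8.deposit, Config_s8.update] at *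
    omega
  flags := by
    have hmems := sum_comp_update_add Memory_s8.flags C.mems p (retired c)
    have hrooms := sum_comp_update_add RoomState_s8.flags C.rooms y (.election true D m)
    have := h.flags
    simp only [hp, hy, Memory_s8.flags, RoomState_s8.flags, Config_s8.update, Bool.toNat_false,
      Bool.toNat_true] at *
    omega
  leader := by
    obtain ⟨q, e, c', hq, hmark⟩ := h.leader
    have hne : q ≠ p := by rintro rfl; simp [hp] at hq
    exact ⟨q, e, c', by simp [hne, hq], mark_update_le (by simpa [hy] using hmark y) hmark⟩

theorem win (h : Election_s8 C) {e c D m : ℕ} {f : Bool} (hp : C.mems p = active e c)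
    (hy : C.rooms y = .election f D m) (hle : n ≤ e + D) :
    Raising (C.update p y (raising 1 (r - 1)) (.election f D m)) p 1 (r - 1) where
  mem := by simp
  bystander q hq := by
    have htwo := add_le_sum (s := univ) (f := fun q => (C.mems q).weight)
      (fun _ _ => Nat.zero_le _) (mem_univ q) (mem_univ p) hq
    have hdep := single_le_sum_of_canonicallyOrdered (f := fun y => (C.rooms y).deposit)
      (mem_univ y)
    have hweight := h.weight
    have hmem := h.mem q
    cases hq' : C.mems q with
    | active e' c' =>
      simp only [hp, hy, hq', Memory_s8.weight, RoomState_s8.deposit, IsElector] at *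
      omega
    | retired => simp [hq, hq']
    | _ => simp [hq'] at hmem
  finished := by
    simp only [Config_s8.update_mems, Nat.add_eq_right, sum_eq_zero_iff, mem_univ, true_imp_iff,
      forall_update_iff C.mems fun _ P => P.finishedCount = 0]
    exact ⟨rfl, fun q _ => (h.mem q).finishedCount_eq_zero⟩
  room x := by
    rw [Config_s8.update_rooms, ← hy, update_eq_self]
    rw [(h.room x).height_eq_zero]
    exact ⟨le_rfl, zero_le_one, (h.room x).token_eq_false⟩
  bounded := by
    rw [Config_s8.update_rooms, ← hy, update_eq_self]
    exact h.bounded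
  height := by
    have hr : 0 < r := y.pos
    simp only [Config_s8.update_rooms, ← hy, update_eq_self, (h.room _).height_eq_zero,
      sum_const_zero]
    omega

theorem step_s8 (h : Election_s8 C) (p : Fin n) (y : Fin r) :
    Invariant_s8 (C.update p y (act n r (C.mems p) (C.rooms y)).1
      (act n r (C.mems p) (C.rooms y)).2) := by
  have hmem := h.mem p
  have hroom := h.room y
  have idle : Invariant_s8 (C.update p y (C.mems p) (C.rooms y)) := by
    simpa [Config_s8.update] using .election h
  cases hy : C.rooms y with
  | raised => simp [hy] at hroom
  | election f D m =>
    rcases hp : C.mems p with ⟨e, c⟩ | ⟨_ | c⟩ | _ | _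
    · simp only [act]
      split_ifs with hlt hle
      · exact .election (h.retire hp hy hlt)
      · exact .raising p _ _ (h.win hp hy hle)
      · exact .election (h.collect hp hy)
    · simpa [act, hp, hy] using idle
    · cases f with
      | false => exact .election (h.returnFlag hp hy)
      | true => simpa [act, hp, hy] using idle
    all_goals simp [hp] at hmem

end Election_s8

theorem sum_finishedCount_lt (hp : (C.mems p).finishedCount = 0) :
    ∑ q, (C.mems q).finishedCount < n := by
  have hle q (_ : q ∈ univ) : (C.mems q).finishedCount ≤ 1 := by cases C.mems q <;> simp
  simpa using sum_lt_sum hle ⟨p, mem_univ p, by omega⟩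

namespace Raising

variable {J k : ℕ}

theorem le (h : Raising C p J k) : J ≤ n :=
  h.finished ▸ sum_finishedCount_lt (p := p) (by simp [h.mem])

theorem raise (h : Raising C p J (k + 1)) (hy : (C.rooms y).height + 1 = J) :
    Raising (C.update p y (.raising J k) (raised J false)) p J k where
  mem := by simp
  bystander q hq := by simpa [hq] using h.bystander q hq
  finished := by
    have hmems := sum_comp_update_add finishedCount C.mems p (.raising J k)
    have := h.finished
    simp only [h.mem, finishedCount, Config_s8.update] at *
    omega
  room := (forall_update_iff C.rooms
    fun _ S => J ≤ S.height + 1 ∧ S.height ≤ J ∧ S.token = false).2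
    ⟨by simp, fun x _ => h.room x⟩
  bounded := (forall_update_iff C.rooms fun _ S => S.Bounded n).2
    ⟨h.le, fun x _ => h.bounded x⟩
  height := by
    have hrooms := sum_comp_update_add RoomState_s8.height C.rooms y (raised J false)
    have := h.height
    simp only [RoomState_s8.height, Config_s8.update] at *
    omega

theorem finish (h : Raising C p J 0) (hy : (C.rooms y).height + 1 = J) :
    Resting (C.update p y (.finished J) (raised J true)) y J where
  bystander := (forall_update_iff C.mems fun _ P => P.IsBystander).2
    ⟨trivial, h.bystander⟩
  finished := by
    have hmems := sum_comp_update_add finishedCount C.mems p (.finished J)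
    have := h.finished
    simp only [h.mem, finishedCount, Config_s8.update] at *
    omega
  room x := by
    have hle := (forall_update_iff C.rooms fun _ S => S.height ≤ J).2
      ⟨(le_rfl : (raised J true).height ≤ J), fun x (_ : x ≠ y) => (h.room x).2.1⟩
    have hsum : ∑ x, (update C.rooms y (raised J true) x).height = ∑ _x : Fin r, J := by
      have hrooms := sum_comp_update_add RoomState_s8.height C.rooms y (raised J true)
      have := h.height
      simp only [RoomState_s8.height, sum_const, card_univ, Fintype.card_fin, smul_eq_mul,
        mul_comm r] at *
      omega
    have hx := forall_eq_of_sum_eq hsum (.inl hle) x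
    have htoken := (h.room x).2.2
    rcases eq_or_ne x y with rfl | hne
    · simp
    · rw [Config_s8.update_rooms, update_of_ne hne]
      rw [update_of_ne hne] at hx
      cases hS : C.rooms x with
      | election => simp only [hS, RoomState_s8.height] at hx; omega
      | raised => simp_all

theorem returnFlag (h : Raising C p J k) {q : Fin n} {c D m : ℕ}
    (hq : C.mems q = retired (c + 1)) (hy : C.rooms y = .election false D m) :
    Raising (C.update q y (retired c) (.election true D m)) p J k where
  mem := by
    have hne : p ≠ q := by rintro rfl; simp [h.mem] at hq
    simp [hne, h.mem]
  bystander := (forall_update_iff C.mems fun x P => x ≠ p → P.IsBystander).2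
    ⟨fun _ => trivial, fun x _ => h.bystander x⟩
  finished := by
    have hmems := sum_comp_update_add finishedCount C.mems q (retired c)
    have := h.finished
    simp only [hq, finishedCount, Config_s8.update] at *
    omega
  room := (forall_update_iff C.rooms
    fun _ S => J ≤ S.height + 1 ∧ S.height ≤ J ∧ S.token = false).2
    ⟨by simpa [hy] using h.room y, fun x _ => h.room x⟩
  bounded := (forall_update_iff C.rooms fun _ S => S.Bounded n).2
    ⟨by simpa [hy] using h.bounded y, fun x _ => h.bounded x⟩
  height := by
    have hrooms := sum_comp_update_add RoomState_s8.height C.rooms y (.election true D m)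
    have := h.height
    simp only [hy, RoomState_s8.height, Config_s8.update] at *
    omega

theorem step_s8 (h : Raising C p J k) (q : Fin n) (y : Fin r) :
    Invariant_s8 (C.update q y (act n r (C.mems q) (C.rooms y)).1
      (act n r (C.mems q) (C.rooms y)).2) := by
  have idle : Invariant_s8 (C.update q y (C.mems q) (C.rooms y)) := by
    simpa [Config_s8.update] using .raising p J k h
  rcases eq_or_ne q p with rfl | hne
  · cases k <;> rw [h.mem] at idle ⊢ <;> simp only [act] <;> split_ifs with hy
    · exact .resting y J (h.finish hy)
    · exact idle
    · exact .raising q J _ (h.raise hy)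
    · exact idle
  · have hmem := h.bystander q hne
    have htoken := (h.room y).2.2
    rcases hq : C.mems q with _ | ⟨_ | c⟩ | _ | _ <;>
      rcases hy : C.rooms y with ⟨_ | _, D, m⟩ | ⟨i, _ | _⟩ <;>
      simp only [hq, hy, IsBystander, RoomState_s8.token, Bool.true_eq_false] at hmem htoken
    case retired.succ.election.false => exact .raising p J k (h.returnFlag hq hy)
    all_goals simpa [act, hq, hy] using idle

end Raising

namespace Resting

variable {J : ℕ}

theorem le (h : Resting C y J) : J ≤ n := by
  have hle p (_ : p ∈ univ) : (C.mems p).finishedCount ≤ 1 := by cases C.mems p <;> simp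
  simpa using h.finished.symm.le.trans (sum_le_card_nsmul univ _ 1 hle)

theorem takeToken (h : Resting C y J) {c : ℕ} (hp : C.mems p = retired c) :
    Raising (C.update p y (raising (J + 1) (r - 1)) (raised J false)) p (J + 1) (r - 1) where
  mem := by simp
  bystander q hq := by simpa [hq] using h.bystander q
  finished := by
    have hmems := sum_comp_update_add finishedCount C.mems p (raising (J + 1) (r - 1))
    have := h.finished
    simp only [hp, finishedCount, Config_s8.update] at *
    omega
  room := (forall_update_iff C.rooms
    fun _ S => J + 1 ≤ S.height + 1 ∧ S.height ≤ J + 1 ∧ S.token = false).2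
    ⟨by simp, fun x hx => by simp [h.room x, hx]⟩
  bounded := (forall_update_iff C.rooms fun _ S => S.Bounded n).2
    ⟨h.le, fun x _ => by simpa [h.room x] using h.le⟩
  height := by
    have hrooms := sum_comp_update_add RoomState_s8.height C.rooms y (raised J false)
    have hr : 0 < r := y.pos
    simp only [h.room, RoomState_s8.height, Config_s8.update, sum_const, card_univ, Fintype.card_fin,
      smul_eq_mul, add_left_inj] at *
    rw [hrooms, add_assoc, Nat.sub_add_cancel hr]
    ring

theorem step_s8 (h : Resting C y J) (p : Fin n) (x : Fin r) :
    Invariant_s8 (C.update p x (act n r (C.mems p) (C.rooms x)).1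
      (act n r (C.mems p) (C.rooms x)).2) := by
  have idle : Invariant_s8 (C.update p x (C.mems p) (C.rooms x)) := by
    simpa [Config_s8.update] using .resting y J h
  have hmem := h.bystander p
  cases hp : C.mems p with
  | retired c =>
    rw [hp] at idle
    rcases eq_or_ne x y with rfl | hne
    · simpa [act, h.room] using .raising p _ _ (h.takeToken hp)
    · simpa [act, h.room, hne] using idle
  | finished j => simpa [act, hp] using idle
  | _ => simp [hp] at hmem

end Resting

namespace Invariant_s8

theorem step_s8 (h : Invariant_s8 C) (p : Fin n) (y : Fin r) :
    Invariant_s8 (C.update p y (act n r (C.mems p) (C.rooms y)).1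
      (act n r (C.mems p) (C.rooms y)).2) := by
  cases h with
  | election h => exact h.step_s8 p y
  | raising _ _ _ h => exact h.step_s8 p y
  | resting _ _ h => exact h.step_s8 p y

theorem bounded (h : Invariant_s8 C) (y : Fin r) : (C.rooms y).Bounded n := by
  cases h with
  | election h => exact h.bounded y
  | raising _ _ _ h => exact h.bounded y
  | resting _ _ h => simpa [h.room y] using h.le

theorem flags_add_flags_le {e c : ℕ} (h : Invariant_s8 C) (hp : C.mems p = active e c) (y : Fin r) :
    c + (C.rooms y).flags ≤ r := by
  cases h with
  | election h => simpa [hp] using h.flags_add_flags_le p y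
  | raising q _ _ h =>
    have hne : p ≠ q := by rintro rfl; simp [h.mem] at hp
    simpa [hp] using h.bystander p hne
  | resting _ _ h => simpa [hp] using h.bystander p

end Invariant_s8

end Invariants

/-! ### Liveness -/

section Liveness

variable {n r : ℕ} {P : Memory_s8} {S : RoomState_s8}

/-- The position just before step `t` when all prisoners follow `electAndCount`. -/
abbrev play (sched : Schedule n r) (t : ℕ) : Config_s8 Memory_s8 RoomState_s8 n r :=
  (electAndCount n r).exec sched t

theorem play_succ (sched : Schedule n r) (t : ℕ) :
    play sched (t + 1) = (play sched t).update (sched t).1 (sched t).2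
      (act n r ((play sched t).mems (sched t).1) ((play sched t).rooms (sched t).2)).1
      (act n r ((play sched t).mems (sched t).1) ((play sched t).rooms (sched t).2)).2 := rfl

theorem play_invariant (sched : Schedule n r) (t : ℕ) : Invariant_s8 (play sched t) := by
  induction t with
  | zero => exact .election (.initial (sched 0).1)
  | succ t ih => exact play_succ sched t ▸ ih.step_s8 _ _

/-- A bound for how often a prisoner's memory can still change. -/
def potential (n r : ℕ) : Memory_s8 → ℕ
  | active e c => (n - e) + (r - c) + (2 * r + 3)
  | retired c => r + c + 2
  | raising _ k => k + 1
  | finished _ => 0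

theorem potential_act (h : ∀ e c, P = active e c → c + S.flags ≤ r) :
    (act n r P S).1 = P ∨ potential n r (act n r P S).1 < potential n r P := by
  fun_cases act n r P S
  case case3 e c f D m _ _ =>
    have hflags := h e c rfl
    rcases D.eq_zero_or_pos with rfl | hD <;> cases f <;>
      simp_all only [potential, RoomState_s8.flags, Bool.toNat_true, Bool.toNat_false] <;> grind
  all_goals simp_all [potential] <;> omega

theorem exists_quiescent (sched : Schedule n r) : ∃ T, (electAndCount n r).Quiescent sched T :=
  Protocol.exists_quiescent (potential n r) fun t =>
    potential_act fun _ _ hp => (play_invariant sched t).flags_add_flags_le hp _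

theorem markLE_act (h : (act n r P S).1 = P) : S.MarkLE (act n r P S).2 := by
  fun_cases act n r P S
  case case3 e c f D m hle hlt =>
    obtain ⟨rfl, rfl⟩ : D = 0 ∧ f = false := by simpa [act, hle, hlt] using h
    exact .election false 0 (not_lt.1 hle)
  all_goals simp_all [act, MarkLE.refl]

theorem act_active_eq_self {e c : ℕ} (hS : S.IsElection)
    (h : (act n r (active e c) S).1 = active e c) :
    e < n ∧ ∃ m ≤ level n r e c, S = .election false 0 m ∧
      (act n r (active e c) S).2 = .election false 0 (level n r e c) := by
  cases S with
  | raised => exact hS.elim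
  | election f D m =>
    simp only [act] at h ⊢
    split_ifs at h ⊢
    simp_all

section Quiescence

variable {T J k : ℕ} {sched : Schedule n r} {p : Fin n} {y : Fin r}

theorem markLE_of_quiescent (hT : (electAndCount n r).Quiescent sched T) {s t : ℕ} (hs : T ≤ s)
    (hst : s ≤ t) (y : Fin r) :
    ((play sched s).rooms y).MarkLE ((play sched t).rooms y) := by
  induction t, hst using Nat.le_induction with
  | base => exact .refl _
  | succ t hst ih =>
    refine ih.trans ?_
    rw [hT.exec_succ_rooms (hs.trans hst)]
    rcases eq_or_ne y (sched t).2 with rfl | hne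
    · rw [update_self]
      have hact := hT.act_fst (hs.trans hst)
      exact markLE_act hact
    · rw [update_of_ne hne]
      exact .refl _

theorem exists_visit (hT : (electAndCount n r).Quiescent sched T) (hfair : sched.Fair) (p : Fin n)
    (y : Fin r) {t₀ : ℕ} (ht₀ : T ≤ t₀) :
    ∃ t, t₀ ≤ t ∧
      (act n r ((play sched T).mems p) ((play sched t).rooms y)).1 = (play sched T).mems p ∧
      (play sched (t + 1)).rooms y = (act n r ((play sched T).mems p) ((play sched t).rooms y)).2 :=
  hT.exists_visit hfair p y ht₀

theorem Raising.not_quiescent (h : Raising (play sched T) p J k) (hfair : sched.Fair) :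
    ¬ (electAndCount n r).Quiescent sched T := by
  intro hT
  obtain ⟨y, hy⟩ : ∃ y, ((play sched T).rooms y).height + 1 = J := by
    by_contra! hne
    have hall y : ((play sched T).rooms y).height = J := by
      have := h.room y
      have := hne y
      omega
    have hsum := h.height
    simp only [hall, sum_const, card_univ, Fintype.card_fin, smul_eq_mul, mul_comm r] at hsum
    omega
  obtain ⟨t, ht, hact, -⟩ := exists_visit hT hfair p y le_rfl
  have hheight := (markLE_of_quiescent hT le_rfl ht y).height_eq
  rw [h.mem] at hact
  rw [hheight] at hy
  cases k <;> rw [act, if_pos hy] at hact <;> simp at hact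

theorem Resting.exists_declares (h : Resting (play sched T) y J) (hfair : sched.Fair)
    (hT : (electAndCount n r).Quiescent sched T) :
    ∃ t, (electAndCount n r).declares ((play sched t).rooms (sched t).2) := by
  have hroom {t} (ht : T ≤ t) : (play sched t).rooms y = raised J true := by
    have hle := markLE_of_quiescent hT le_rfl ht y
    rw [h.room, decide_eq_true rfl] at hle
    exact hle.eq_of_raised
  have hfinished p : ((play sched T).mems p).finishedCount = 1 := by
    have hmem := h.bystander p
    obtain ⟨t, ht, hact, -⟩ := exists_visit hT hfair p y le_rfl
    cases hp : (play sched T).mems p with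
    | finished => rfl
    | retired => simp [act, hroom ht, hp] at hact
    | _ => simp [hp] at hmem
  have hJ : n = J := by simpa only [hfinished, sum_const, card_univ, Fintype.card_fin,
    smul_eq_mul, mul_one] using h.finished
  obtain ⟨t, hvisit, ht⟩ := (hfair (sched 0).1 y).exists_gt T
  refine ⟨t, ?_⟩
  rw [hvisit, hroom ht.le, ← hJ]
  exact decide_eq_true rfl

namespace Election_s8

theorem exists_visit_active (h : Election_s8 (play sched T)) (hfair : sched.Fair)
    (hT : (electAndCount n r).Quiescent sched T) {e c : ℕ}
    (hp : (play sched T).mems p = active e c) (y : Fin r) {t₀ : ℕ} (ht₀ : T ≤ t₀) :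
    e < n ∧ ∃ t, t₀ ≤ t ∧
      (∃ m ≤ level n r e c, (play sched t).rooms y = .election false 0 m) ∧
      (play sched (t + 1)).rooms y = .election false 0 (level n r e c) := by
  obtain ⟨t, ht, hact, hroom⟩ := exists_visit hT hfair p y ht₀
  rw [hp] at hact hroom
  have hS := (markLE_of_quiescent hT le_rfl (ht₀.trans ht) y).isElection (h.room y)
  obtain ⟨he, m, hm, hy, hact'⟩ := act_active_eq_self hS hact
  exact ⟨he, t, ht, ⟨m, hm, hy⟩, hroom.trans hact'⟩

theorem level_le_level (h : Election_s8 (play sched T)) (hfair : sched.Fair)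
    (hT : (electAndCount n r).Quiescent sched T) {p' : Fin n} {e c e' c' : ℕ}
    (hp : (play sched T).mems p = active e c)
    (hp' : (play sched T).mems p' = active e' c') :
    level n r e c ≤ level n r e' c' := by
  obtain ⟨-, t, ht, -, hroom⟩ := h.exists_visit_active hfair hT hp (sched 0).2 le_rfl
  obtain ⟨-, t', ht', ⟨m, hm, hroom'⟩, -⟩ :=
    h.exists_visit_active hfair hT hp' (sched 0).2 (ht.trans t.le_succ)
  have hle := markLE_of_quiescent hT (ht.trans t.le_succ) ht' (sched 0).2
  rw [hroom, hroom'] at hle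
  exact hle.mark_le.trans hm

theorem exists_room_eq (h : Election_s8 (play sched T)) (hfair : sched.Fair)
    (hT : (electAndCount n r).Quiescent sched T) (y : Fin r) {t : ℕ}
    (ht : T ≤ t) : ∃ m, (play sched t).rooms y = .election false 0 m := by
  obtain ⟨p, e, c, hp, -⟩ := h.leader
  obtain ⟨-, t', ht', ⟨m, -, hroom⟩, -⟩ := h.exists_visit_active hfair hT hp y ht
  have hle := markLE_of_quiescent hT ht ht' y
  rw [hroom] at hle
  exact hle.exists_eq_election

theorem flags_of_retired (h : Election_s8 (play sched T)) (hfair : sched.Fair)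
    (hT : (electAndCount n r).Quiescent sched T) {c : ℕ}
    (hp : (play sched T).mems p = retired c) : c = 0 := by
  obtain ⟨t, ht, hact, -⟩ := exists_visit hT hfair p (sched 0).2 le_rfl
  obtain ⟨m, hroom⟩ := h.exists_room_eq hfair hT (sched 0).2 ht
  cases c with
  | zero => rfl
  | succ c => simp [act, hp, hroom] at hact

theorem fairShare_le_or_ge (h : Election_s8 (play sched T)) (hfair : sched.Fair)
    (hT : (electAndCount n r).Quiescent sched T) :
    (∀ q, r * ((play sched T).mems q).weight ≤ n * ((play sched T).mems q).flags) ∨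
      ∀ q, n * ((play sched T).mems q).flags ≤ r * ((play sched T).mems q).weight := by
  obtain ⟨p, e, c, hp, -⟩ := h.leader
  have hiff {q e' c'} (hq : (play sched T).mems q = active e' c') :
      r * e ≤ n * c ↔ r * e' ≤ n * c' :=
    fairShare_le_iff_of_level_eq ((h.level_le_level hfair hT hp hq).antisymm
      (h.level_le_level hfair hT hq hp))
  refine (em (r * e ≤ n * c)).imp (fun hle q => ?_) fun hlt q => ?_
  all_goals
    have hmem := h.mem q
    cases hq : (play sched T).mems q with
    | active e' c' => grind [Memory_s8.weight, Memory_s8.flags]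
    | retired c' => simp [h.flags_of_retired hfair hT hq]
    | _ => simp [hq] at hmem

theorem fairShare_eq (h : Election_s8 (play sched T)) (hfair : sched.Fair)
    (hT : (electAndCount n r).Quiescent sched T) (q : Fin n) :
    r * ((play sched T).mems q).weight = n * ((play sched T).mems q).flags := by
  have hdeposit y : ((play sched T).rooms y).deposit = 0 := by
    obtain ⟨m, hy⟩ := h.exists_room_eq hfair hT y le_rfl
    rw [hy, RoomState_s8.deposit]
  have hflags y : ((play sched T).rooms y).flags = 0 := by
    obtain ⟨m, hy⟩ := h.exists_room_eq hfair hT y le_rfl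
    rw [hy, RoomState_s8.flags, Bool.toNat_false]
  have hweight := h.weight
  have hflag := h.flags
  simp only [hdeposit, hflags, sum_const_zero, add_zero] at hweight hflag
  refine forall_eq_of_sum_eq ?_ (h.fairShare_le_or_ge hfair hT) q
  rw [← mul_sum, ← mul_sum, hweight, hflag, mul_comm]

theorem not_quiescent (h : Election_s8 (play sched T)) (hfair : sched.Fair)
    (hcop : n.Coprime r) : ¬ (electAndCount n r).Quiescent sched T := by
  intro hT
  obtain ⟨p, e, c, hp, -⟩ := h.leader
  have hpos : 0 < e := by simpa [hp] using h.mem p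
  have hlt : e < n := (h.exists_visit_active hfair hT hp (sched 0).2 le_rfl).1
  have hdvd : n ∣ e := hcop.dvd_of_dvd_mul_left ⟨c, by simpa [hp] using h.fairShare_eq hfair hT p⟩
  exact hlt.not_ge (Nat.le_of_dvd hpos hdvd)

end Election_s8

end Quiescence

theorem exists_declares {sched : Schedule n r} (hcop : n.Coprime r) (hfair : sched.Fair) :
    ∃ t, (electAndCount n r).declares ((play sched t).rooms (sched t).2) := by
  obtain ⟨T, hT⟩ := exists_quiescent sched
  cases play_invariant sched T with
  | election h => exact absurd hT (h.not_quiescent hfair hcop)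
  | raising p J k h => exact absurd hT (h.not_quiescent hfair)
  | resting y J h => exact h.exists_declares hfair hT

end Liveness

/-! ### Safety -/

section Safety

variable {n r : ℕ} {P : Memory_s8} {S : RoomState_s8}

theorem rank_act (hP : P.rank ≠ 0) : (act n r P S).1.rank = P.rank := by
  fun_cases act n r P S <;> simp_all

theorem height_act : (act n r P S).2.height = S.height ∨
    (act n r P S).2.height = S.height + 1 ∧ (act n r P S).1.rank = S.height + 1 := by
  fun_cases act n r P S <;> simp_all

theorem exists_rank_eq_of_le_height (sched : Schedule n r) (t : ℕ) (y : Fin r) {i : ℕ}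
    (hi : i ≠ 0) (hle : i ≤ ((play sched t).rooms y).height) :
    ∃ p, ((play sched t).mems p).rank = i ∧ ∃ s < t, sched s = (p, y) := by
  induction t generalizing y with
  | zero => exact absurd (Nat.le_zero.1 hle) hi
  | succ t ih =>
    rw [play_succ] at hle ⊢
    simp only [Config_s8.update_mems, Config_s8.update_rooms] at hle ⊢
    by_cases hold : i ≤ ((play sched t).rooms y).height
    · obtain ⟨p, hp, s, hs, hvisit⟩ := ih y hold
      refine ⟨p, ?_, s, hs.trans t.lt_succ_self, hvisit⟩
      rcases eq_or_ne p (sched t).1 with rfl | hne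
      · rw [update_self, rank_act (hp.trans_ne hi), hp]
      · rw [update_of_ne hne, hp]
    · obtain rfl : y = (sched t).2 := by
        by_contra hne
        exact hold (by rwa [update_of_ne hne] at hle)
      rw [update_self] at hle
      refine ⟨(sched t).1, ?_, t, t.lt_succ_self, rfl⟩
      rw [update_self]
      obtain heq | ⟨heq, hrank⟩ := height_act (n := n) (r := r)
        (P := (play sched t).mems (sched t).1) (S := (play sched t).rooms (sched t).2) <;> omega

theorem height_eq_of_declares {sched : Schedule n r} {t : ℕ}
    (hdec : (electAndCount n r).declares ((play sched t).rooms (sched t).2)) (y : Fin r) :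
    ((play sched t).rooms y).height = n := by
  replace hdec : (play sched t).rooms (sched t).2 = raised n true := of_decide_eq_true hdec
  cases play_invariant sched t with
  | election h => simpa [hdec] using h.room (sched t).2
  | raising p J k h => simpa [hdec] using h.room (sched t).2
  | resting x J h =>
    have hJ := h.room (sched t).2
    rw [hdec, RoomState_s8.raised.injEq] at hJ
    rw [h.room y, hJ.1, RoomState_s8.height]

theorem allVisitedBy_of_declares {sched : Schedule n r} {t : ℕ}
    (hdec : (electAndCount n r).declares ((play sched t).rooms (sched t).2)) :
    allVisitedBy sched t := by
  intro p y
  have hexists (i : Fin n) := exists_rank_eq_of_le_height sched t y (i : ℕ).succ_ne_zero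
    (i.2.trans_eq (height_eq_of_declares hdec y).symm)
  choose f hrank hvisit using hexists
  have hinj : Injective f := fun i j hij => by
    have hi := hrank i
    rw [hij, hrank j] at hi
    omega
  obtain ⟨i, rfl⟩ := Finite.surjective_of_injective hinj p
  obtain ⟨s, hs, hvisited⟩ := hvisit i
  exact ⟨s, hs.le, hvisited⟩

end Safety

end PrisonersGame

open PrisonersGame in
theorem symmetric_strategy_few_prisoners_general (n : ℕ) :
    ∃ q : ℕ, ∀ r : ℕ, Nat.Coprime n r → HasSymmetricWinningStrategy n r q := by
  obtain ⟨code, decode, q, hdecode, hcode, hpos, hlt⟩ :=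
    exists_coding (RoomState_s8.finite_setOf_bounded n) (.election true 0 0)
  exact ⟨q, fun r hcop => Protocol.hasSymmetricWinningStrategy (π := electAndCount n r) hdecode
    hcode hpos (fun sched t y => hlt _ ((play_invariant sched t).bounded y))
    (fun _ hfair => exists_declares hcop hfair) fun _ _ hdec => allVisitedBy_of_declares hdec⟩

open PrisonersGame in
/-- For every `n ≥ 1` there exists `q = q(n)` such that for every `r > n` with
`gcd(n, r) = 1`, the `n` prisoners have a symmetric winning strategy for `r`
rooms with `q` states. -/
theorem symmetric_strategy_few_prisoners (n : ℕ) (hn : 1 ≤ n) :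
    ∃ q : ℕ, ∀ r : ℕ, n < r → Nat.gcd n r = 1 →
      HasSymmetricWinningStrategy n r q :=
  (symmetric_strategy_few_prisoners_general n).imp fun _ hq r _ hgcd => hq r hgcd
end
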